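/- Let 𝕜 be an algebraically closed field of characteristic zero. Let Ω ∈ 𝕜[x,y,z] be a homogeneous polynomial of degree d ≥ 5 with an isolated singularity, ξ ∈ 𝕜, and let K be a commutative 𝕜-algebra which is a field equipped with a Poisson bracket (a Poisson field over 𝕜). Then the group Aut_{Poi.alg}(K ⊗_𝕜 P_{Ω−ξ} | K) of Poisson 𝕜-algebra automorphisms of K ⊗_𝕜 P_{Ω−ξ} fixing K ⊗ 1 pointwise is finite of order at most 42·d·(d−3)². -/

import Mathlib

open scoped TensorProduct

/-- A Poisson bracket on a commutative algebra `A` over `𝕜`: a bilinear, antisymmetric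
bracket satisfying the Jacobi identity and the Leibniz rule. -/
structure PoissonStructure (𝕜 A : Type*) [CommRing 𝕜] [CommRing A] [Algebra 𝕜 A] where
  bracket : A → A → A
  add_left : ∀ a b c : A, bracket (a + b) c = bracket a c + bracket b c
  smul_left : ∀ (r : 𝕜) (a b : A), bracket (r • a) b = r • bracket a b
  antisymm : ∀ a b : A, bracket a b = - bracket b a
  jacobi : ∀ a b c : A,
    bracket a (bracket b c) + bracket b (bracket c a) + bracket c (bracket a b) = 0
  leibniz : ∀ a b c : A, bracket a (b * c) = bracket a b * c + b * bracket a c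

/-- `f` is a morphism of Poisson algebras. -/
def IsPoissonHom {𝕜 A B : Type*} [CommRing 𝕜] [CommRing A] [CommRing B]
    [Algebra 𝕜 A] [Algebra 𝕜 B]
    (PA : PoissonStructure 𝕜 A) (PB : PoissonStructure 𝕜 B) (f : A →ₐ[𝕜] B) : Prop :=
  ∀ a b : A, f (PA.bracket a b) = PB.bracket (f a) (f b)

/-- A Poisson algebra is Dixmier if every injective Poisson endomorphism is bijective. -/
def IsDixmier (𝕜 A : Type*) [CommRing 𝕜] [CommRing A] [Algebra 𝕜 A]
    (PA : PoissonStructure 𝕜 A) : Prop :=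
  ∀ f : A →ₐ[𝕜] A, IsPoissonHom PA PA f → Function.Injective f → Function.Bijective f

/-- The tensor-product Poisson bracket on `A ⊗[𝕜] B`. -/
def IsTensorBracket {𝕜 A B : Type*} [CommRing 𝕜] [CommRing A] [CommRing B]
    [Algebra 𝕜 A] [Algebra 𝕜 B] (PA : PoissonStructure 𝕜 A) (PB : PoissonStructure 𝕜 B)
    (PT : PoissonStructure 𝕜 (A ⊗[𝕜] B)) : Prop :=
  ∀ (a a' : A) (b b' : B),
    PT.bracket (a ⊗ₜ[𝕜] b) (a' ⊗ₜ[𝕜] b') =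
      PA.bracket a a' ⊗ₜ[𝕜] (b * b') + (a * a') ⊗ₜ[𝕜] PB.bracket b b'

/-- `A` is `R`-Dixmier: every injective Poisson morphism `A → A ⊗ R` has image `A ⊗ 𝕜·1`. -/
def IsRelDixmier (𝕜 A R : Type*) [CommRing 𝕜] [CommRing A] [CommRing R]
    [Algebra 𝕜 A] [Algebra 𝕜 R] (PA : PoissonStructure 𝕜 A)
    (PT : PoissonStructure 𝕜 (A ⊗[𝕜] R)) : Prop :=
  ∀ f : A →ₐ[𝕜] A ⊗[𝕜] R, IsPoissonHom PA PT f → Function.Injective f →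
    Set.range f = Set.range fun a : A => a ⊗ₜ[𝕜] (1 : R)

/-- A Poisson algebra is Poisson simple if its only Poisson ideals are `0` and the whole ring. -/
def IsPoissonSimple {𝕜 A : Type*} [CommRing 𝕜] [CommRing A] [Algebra 𝕜 A]
    (PA : PoissonStructure 𝕜 A) : Prop :=
  ∀ I : Ideal A, (∀ x : A, ∀ y ∈ I, PA.bracket x y ∈ I) → I = ⊥ ∨ I = ⊤

open MvPolynomial in
/-- The Jacobian Poisson bracket with potential `Ω` on `𝕜[x,y,z]`. -/
noncomputable def jacBracket {𝕜 : Type*} [CommRing 𝕜]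
    (Ω f g : MvPolynomial (Fin 3) 𝕜) : MvPolynomial (Fin 3) 𝕜 :=
  Matrix.det (Matrix.of
    ![![pderiv 0 f, pderiv 1 f, pderiv 2 f],
      ![pderiv 0 g, pderiv 1 g, pderiv 2 g],
      ![pderiv 0 Ω, pderiv 1 Ω, pderiv 2 Ω]])

open MvPolynomial in
/-- `Ω` has an isolated singularity at the origin. -/
def HasIsolatedSingularity {𝕜 : Type*} [Field 𝕜] (Ω : MvPolynomial (Fin 3) 𝕜) : Prop :=
  FiniteDimensional 𝕜
    (MvPolynomial (Fin 3) 𝕜 ⧸ Ideal.span {pderiv (0 : Fin 3) Ω, pderiv 1 Ω, pderiv 2 Ω})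

/-- The underlying commutative algebra of `P_{Ω-ξ} = 𝕜[x,y,z]/(Ω-ξ)`. -/
def PQuot (𝕜 : Type*) [CommRing 𝕜] (Ω : MvPolynomial (Fin 3) 𝕜) (ξ : 𝕜) : Type _ :=
  MvPolynomial (Fin 3) 𝕜 ⧸ Ideal.span {Ω - MvPolynomial.C ξ}

noncomputable instance {𝕜 : Type*} [CommRing 𝕜] (Ω : MvPolynomial (Fin 3) 𝕜) (ξ : 𝕜) :
    CommRing (PQuot 𝕜 Ω ξ) :=
  inferInstanceAs (CommRing (MvPolynomial (Fin 3) 𝕜 ⧸ Ideal.span {Ω - MvPolynomial.C ξ}))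

noncomputable instance {𝕜 : Type*} [CommRing 𝕜] (Ω : MvPolynomial (Fin 3) 𝕜) (ξ : 𝕜) :
    Algebra 𝕜 (PQuot 𝕜 Ω ξ) :=
  inferInstanceAs (Algebra 𝕜 (MvPolynomial (Fin 3) 𝕜 ⧸ Ideal.span {Ω - MvPolynomial.C ξ}))

/-- The canonical (surjective) projection `𝕜[x,y,z] → P_{Ω-ξ}`. -/
noncomputable def PQuot.mk {𝕜 : Type*} [CommRing 𝕜] (Ω : MvPolynomial (Fin 3) 𝕜) (ξ : 𝕜)
    (f : MvPolynomial (Fin 3) 𝕜) : PQuot 𝕜 Ω ξ :=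
  Ideal.Quotient.mk (Ideal.span {Ω - MvPolynomial.C ξ}) f

/-- `P` is the Poisson bracket on `P_{Ω-ξ}` induced from the Jacobian bracket on `A_Ω`. -/
def IsInducedBracket {𝕜 : Type*} [CommRing 𝕜] (Ω : MvPolynomial (Fin 3) 𝕜) (ξ : 𝕜)
    (P : PoissonStructure 𝕜 (PQuot 𝕜 Ω ξ)) : Prop :=
  ∀ f g : MvPolynomial (Fin 3) 𝕜,
    P.bracket (PQuot.mk Ω ξ f) (PQuot.mk Ω ξ g) = PQuot.mk Ω ξ (jacBracket Ω f g)

open PiTensorProduct in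
/-- The Poisson bracket on a finite tensor product `⨂[𝕜] i, A i`. -/
def IsPiTensorBracket {𝕜 : Type*} [CommRing 𝕜] {d : ℕ} {A : Fin d → Type*}
    [∀ i, CommRing (A i)] [∀ i, Algebra 𝕜 (A i)]
    (P : ∀ i, PoissonStructure 𝕜 (A i))
    (PT : PoissonStructure 𝕜 (⨂[𝕜] i, A i)) : Prop :=
  ∀ a b : (i : Fin d) → A i,
    PT.bracket (⨂ₜ[𝕜] i, a i) (⨂ₜ[𝕜] i, b i) =
      ∑ i : Fin d,
        ⨂ₜ[𝕜] j, Function.update (fun j => a j * b j) i ((P i).bracket (a i) (b i)) j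

/-- The Poisson-torus bracket associated to a matrix `Λ` on the Laurent polynomial ring
`𝕜[x₁^{±1},…,xₙ^{±1}]`, realized as the group algebra of `ℤⁿ`:
`{x^u, x^v} = (Σ_{i,j} uᵢ λᵢⱼ vⱼ) x^{u+v}`. -/
def IsTorusBracket {𝕜 : Type*} [CommRing 𝕜] (n : ℕ) (Λ : Matrix (Fin n) (Fin n) 𝕜)
    (P : PoissonStructure 𝕜 (AddMonoidAlgebra 𝕜 (Fin n → ℤ))) : Prop :=
  ∀ u v : Fin n → ℤ,
    P.bracket (AddMonoidAlgebra.single u (1 : 𝕜)) (AddMonoidAlgebra.single v (1 : 𝕜)) =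
      (∑ i, ∑ j, (u i : 𝕜) * Λ i j * (v j : 𝕜)) • AddMonoidAlgebra.single (u + v) (1 : 𝕜)

/-- `ν : A → ℤ ∪ {∞}` is a `w`-valuation on the Poisson algebra `A`. -/
structure IsWValuation {𝕜 A : Type*} [CommRing 𝕜] [CommRing A] [Algebra 𝕜 A]
    (P : PoissonStructure 𝕜 A) (w : ℤ) (ν : A → WithTop ℤ) : Prop where
  eq_top_iff : ∀ a : A, ν a = ⊤ ↔ a = 0
  scalar : ∀ c : 𝕜, c ≠ 0 → ν (algebraMap 𝕜 A c) = 0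
  map_mul : ∀ a b : A, ν (a * b) = ν a + ν b
  map_add : ∀ a b : A, min (ν a) (ν b) ≤ ν (a + b)
  map_bracket : ∀ a b : A, ν a + ν b ≤ ν (P.bracket a b) + (w : WithTop ℤ)


namespace PotAut
open MvPolynomial

/-- Linear substitution `f ↦ f(Mx)`. -/
noncomputable def lsub {R : Type*} [CommRing R] (M : Matrix (Fin 3) (Fin 3) R) :
    MvPolynomial (Fin 3) R →ₐ[R] MvPolynomial (Fin 3) R :=
  aeval (fun i => ∑ j, C (M i j) * X j)

/-- Smoothness in terms of points. -/
def Sm {R : Type*} [CommRing R] (Ω : MvPolynomial (Fin 3) R) : Prop :=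
  ∀ v : Fin 3 → R, (∀ j, eval v (pderiv j Ω) = 0) → v = 0

section ring
variable {R : Type*} [CommRing R]

lemma lsub_X (M : Matrix (Fin 3) (Fin 3) R) (i : Fin 3) :
    lsub M (X i) = ∑ j, C (M i j) * X j := by
  simp [lsub]

lemma lsub_C (M : Matrix (Fin 3) (Fin 3) R) (c : R) : lsub M (C c) = C c := by
  simp [lsub]

lemma eval_lsub (M : Matrix (Fin 3) (Fin 3) R) (v : Fin 3 → R) (f : MvPolynomial (Fin 3) R) :
    eval v (lsub M f) = eval (M.mulVec v) f := by
  induction f using MvPolynomial.induction_on with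
  | C a => simp [lsub_C]
  | add p q hp hq => simp [hp, hq]
  | mul_X p i hp =>
    rw [map_mul, map_mul, map_mul, hp, lsub_X]
    simp [Matrix.mulVec, dotProduct]

lemma lsub_mul (A B : Matrix (Fin 3) (Fin 3) R) (f : MvPolynomial (Fin 3) R) :
    lsub (A * B) f = lsub B (lsub A f) := by
  induction f using MvPolynomial.induction_on with
  | C a => simp [lsub_C]
  | add p q hp hq => simp [hp, hq]
  | mul_X p i hp =>
    rw [map_mul, map_mul, map_mul, hp, lsub_X, lsub_X]
    congr 1
    simp only [Matrix.mul_apply, Fin.sum_univ_three, map_add, map_mul, lsub_X, lsub_C]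
    ring

lemma lsub_one (f : MvPolynomial (Fin 3) R) : lsub (1 : Matrix (Fin 3) (Fin 3) R) f = f := by
  have : lsub (1 : Matrix (Fin 3) (Fin 3) R) = AlgHom.id R _ := by
    ext i
    simp [lsub_X, Matrix.one_apply]
  rw [this]; rfl

lemma pderiv_lsub (M : Matrix (Fin 3) (Fin 3) R) (j : Fin 3) (f : MvPolynomial (Fin 3) R) :
    pderiv j (lsub M f) = ∑ i, C (M i j) * lsub M (pderiv i f) := by
  induction f using MvPolynomial.induction_on with
  | C a => simp [lsub_C]
  | add p q hp hq => simp [hp, hq, mul_add, Finset.sum_add_distrib]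
  | mul_X p i hp =>
    rw [map_mul, Derivation.leibniz, hp, lsub_X]
    simp only [Derivation.leibniz, map_add, smul_eq_mul, map_mul, map_sum, pderiv_C, mul_zero,
      add_zero, pderiv_X, lsub_X, Fin.sum_univ_three]
    fin_cases j <;> fin_cases i <;> simp [Pi.single_apply] <;> ring

lemma lsub_isHomogeneous (M : Matrix (Fin 3) (Fin 3) R) {f : MvPolynomial (Fin 3) R} {n : ℕ}
    (hf : f.IsHomogeneous n) : (lsub M f).IsHomogeneous n := by
  have := hf.aeval (fun i => ∑ j, C (M i j) * X j : Fin 3 → MvPolynomial (Fin 3) R) (n := 1)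
    (fun i => IsHomogeneous.sum _ _ _ fun j _ => isHomogeneous_C_mul_X _ _)
  simpa [lsub] using this

lemma map_lsub {S : Type*} [CommRing S] (φ : R →+* S) (M : Matrix (Fin 3) (Fin 3) R)
    (f : MvPolynomial (Fin 3) R) : map φ (lsub M f) = lsub (M.map φ) (map φ f) := by
  induction f using MvPolynomial.induction_on with
  | C a => simp [lsub_C]
  | add p q hp hq => simp [hp, hq]
  | mul_X p i hp =>
    rw [map_mul, map_mul, map_mul, map_mul, hp, lsub_X, map_X, lsub_X]
    simp

lemma lsub_diag_coeff (a : Fin 3 → R) (f : MvPolynomial (Fin 3) R) (m : Fin 3 →₀ ℕ) :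
    coeff m (lsub (Matrix.diagonal a) f) = (∏ i, a i ^ m i) * coeff m f := by
  induction f using MvPolynomial.induction_on' with
  | add p q hp hq => rw [map_add, coeff_add, coeff_add, mul_add, hp, hq]
  | monomial s c =>
    have : lsub (Matrix.diagonal a) (monomial s c) = C (∏ i, a i ^ s i) * monomial s c := by
      rw [monomial_eq, map_mul, lsub_C, Finsupp.prod_fintype _ _ (by simp), map_prod]
      simp only [map_pow, lsub_X, Matrix.diagonal_apply, map_prod, Fin.prod_univ_three,
        Fin.sum_univ_three]
      simp
      ring
    rw [this, coeff_C_mul, coeff_monomial]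
    split_ifs with h
    · subst h; rfl
    · simp

end ring

section field
variable {L : Type*} [Field L]

lemma Sm_lsub {Ω : MvPolynomial (Fin 3) L} (h : Sm Ω) {P : Matrix (Fin 3) (Fin 3) L}
    (hP : P.det ≠ 0) : Sm (lsub P Ω) := by
  intro v hv
  have h1 : Matrix.vecMul (fun i => eval (P.mulVec v) (pderiv i Ω)) P = 0 := by
    funext j
    have := hv j
    rw [pderiv_lsub] at this
    simp only [map_sum, map_mul, eval_C, eval_lsub] at this
    simp only [Matrix.vecMul, dotProduct, Pi.zero_apply]
    rw [← this]
    exact Finset.sum_congr rfl fun i _ => mul_comm _ _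
  have h2 := Matrix.eq_zero_of_vecMul_eq_zero hP h1
  have h3 := h (P.mulVec v) (fun j => congrFun h2 j)
  exact Matrix.eq_zero_of_mulVec_eq_zero hP h3

lemma euler_eval {Ω : MvPolynomial (Fin 3) L} {d : ℕ} (h : Ω.IsHomogeneous d) (v : Fin 3 → L) :
    v 0 * eval v (pderiv 0 Ω) + v 1 * eval v (pderiv 1 Ω) + v 2 * eval v (pderiv 2 Ω)
      = d * eval v Ω := by
  have := congrArg (eval v) h.sum_X_mul_pderiv
  simpa [Fin.sum_univ_three] using this

end field
end PotAut


namespace PotAut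
open MvPolynomial

/-- `N` is a linear vector field killing `Ω`. -/
def Syz {R : Type*} [CommRing R] (N : Matrix (Fin 3) (Fin 3) R) (Ω : MvPolynomial (Fin 3) R) :
    Prop := ∑ i, lsub N (X i) * pderiv i Ω = 0

section
variable {L : Type*} [Field L]

lemma Syz.conj {N N' P : Matrix (Fin 3) (Fin 3) L} {Ω : MvPolynomial (Fin 3) L}
    (h : Syz N Ω) (hP : N * P = P * N') : Syz N' (lsub P Ω) := by
  have h1 : lsub P (∑ i, lsub N (X i) * pderiv i Ω) = 0 := by rw [h, map_zero]
  unfold Syz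
  rw [← h1]
  simp only [map_sum, map_mul, ← lsub_mul, hP, pderiv_lsub]
  simp only [lsub_mul P N', lsub_X P]
  simp only [Fin.sum_univ_three, map_add, map_mul, lsub_C]
  ring

lemma euler_at_e0 {Ω : MvPolynomial (Fin 3) L} {d : ℕ} (h : Ω.IsHomogeneous d) :
    eval ![1, 0, 0] (pderiv 0 Ω) = d * eval ![1, 0, 0] Ω := by
  have := euler_eval h ![1, 0, 0]
  simpa using this

lemma pderiv_comm' (i j : Fin 3) (f : MvPolynomial (Fin 3) L) :
    pderiv i (pderiv j f) = pderiv j (pderiv i f) := by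
  induction f using MvPolynomial.induction_on with
  | C a => simp
  | add p q hp hq => simp [hp, hq]
  | mul_X p k hp =>
    simp only [Derivation.leibniz, map_add, smul_eq_mul, hp, pderiv_X]
    fin_cases i <;> fin_cases j <;> fin_cases k <;> simp <;> ring

variable [CharZero L]

lemma syz_coord3 {Ω : MvPolynomial (Fin 3) L} {d : ℕ} (hom : Ω.IsHomogeneous d) (hd : 3 ≤ d)
    (hs : Sm Ω) (h : X 1 * pderiv 0 Ω + X 2 * pderiv 1 Ω = 0) : False := by
  have e1 : eval ![1,0,0] (pderiv 0 Ω) = 0 := by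
    have := congrArg (fun f => eval ![1,0,0] (pderiv 1 f)) h
    simpa [Derivation.leibniz, pderiv_X] using this
  have e2 : eval ![1,0,0] (pderiv 1 Ω) = 0 := by
    have := congrArg (fun f => eval ![1,0,0] (pderiv 2 f)) h
    simpa [Derivation.leibniz, pderiv_X] using this
  have e3 : eval ![1,0,0] (pderiv 2 (pderiv 0 Ω)) + eval ![1,0,0] (pderiv 1 (pderiv 1 Ω)) = 0 := by
    have := congrArg (fun f => eval ![1,0,0] (pderiv 1 (pderiv 2 f))) h
    simpa [Derivation.leibniz, pderiv_X] using this
  have e4 : eval ![1,0,0] (pderiv 1 (pderiv 1 (pderiv 0 Ω))) = 0 := by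
    have := congrArg (fun f => eval ![1,0,0] (pderiv 1 (pderiv 1 (pderiv 1 f)))) h
    simp [Derivation.leibniz, pderiv_X] at this
    have h3 : (3 : L) ≠ 0 := by norm_num
    apply mul_left_cancel₀ h3
    linear_combination this
  have u1 := euler_at_e0 (hom.pderiv (i := 2))
  have u2 := euler_at_e0 ((hom.pderiv (i := 1)).pderiv (i := 1))
  rw [pderiv_comm'] at u1
  rw [pderiv_comm' 0 1, pderiv_comm' 0 1, e4] at u2
  have hd1 : ((d - 1 : ℕ) : L) ≠ 0 := by rw [Nat.cast_ne_zero]; omega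
  have hd2 : ((d - 1 - 1 : ℕ) : L) ≠ 0 := by rw [Nat.cast_ne_zero]; omega
  have v2 : eval ![1,0,0] (pderiv 1 (pderiv 1 Ω)) = 0 := by
    rcases mul_eq_zero.1 u2.symm with h | h
    · exact absurd h hd2
    · exact h
  rw [v2, add_zero] at e3
  rw [e3] at u1
  have v1 : eval ![1,0,0] (pderiv 2 Ω) = 0 := by
    rcases mul_eq_zero.1 u1.symm with h | h
    · exact absurd h hd1
    · exact h
  have := hs ![1,0,0] (fun j => match j with | 0 => e1 | 1 => e2 | 2 => v1)
  have := congrFun this 0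
  simp at this

lemma syz_coord2 {Ω : MvPolynomial (Fin 3) L} {d : ℕ} (hom : Ω.IsHomogeneous d) (hd : 3 ≤ d)
    (hs : Sm Ω) (h : pderiv 0 Ω = 0) : False := by
  have hd1 : ((d - 1 : ℕ) : L) ≠ 0 := by rw [Nat.cast_ne_zero]; omega
  have key : ∀ j, eval ![1,0,0] (pderiv j Ω) = 0 := by
    intro j
    have u1 := euler_at_e0 (hom.pderiv (i := j))
    rw [pderiv_comm', h] at u1
    simp only [map_zero] at u1
    rcases mul_eq_zero.1 u1.symm with h | h
    · exact absurd h hd1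
    · exact h
  have := hs ![1,0,0] key
  have := congrFun this 0
  simp at this

lemma syz_nilp {Ω : MvPolynomial (Fin 3) L} {d : ℕ} (hom : Ω.IsHomogeneous d) (hd : 3 ≤ d)
    (hs : Sm Ω) {N : Matrix (Fin 3) (Fin 3) L} (h : Syz N Ω) (h3 : N ^ 3 = 0) : N = 0 := by
  by_cases h2 : N ^ 2 = 0
  · by_contra hN
    obtain ⟨e, he⟩ : ∃ e, N.mulVec e ≠ 0 := by
      by_contra hc
      push Not at hc
      exact hN (by ext i j; have := congrFun (hc (Pi.single j 1)) i; simpa using this)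
    have hNN : ∀ x, N.mulVec (N.mulVec x) = 0 := by
      intro x; rw [Matrix.mulVec_mulVec, ← sq, h2, Matrix.zero_mulVec]
    set u := N.mulVec e with hu
    have hker : 2 ≤ Module.finrank L (LinearMap.ker N.mulVecLin) := by
      have := LinearMap.finrank_range_add_finrank_ker N.mulVecLin
      have hle : LinearMap.range N.mulVecLin ≤ LinearMap.ker N.mulVecLin := by
        rintro _ ⟨x, rfl⟩
        simp [hNN]
      have := Submodule.finrank_mono hle
      simp at *
      omega
    obtain ⟨f, hf, hfu⟩ : ∃ f, N.mulVec f = 0 ∧ f ∉ Submodule.span L {u} := by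
      by_contra hc
      push Not at hc
      have hle : LinearMap.ker N.mulVecLin ≤ Submodule.span L {u} := by
        intro x hx
        exact hc x (by simpa using hx)
      have h1 := Submodule.finrank_mono hle
      have h2 := finrank_span_le_card (R := L) ({u} : Set (Fin 3 → L))
      simp at h2
      omega
    let P : Matrix (Fin 3) (Fin 3) L := Matrix.of fun i j => (![u, e, f] j) i
    have hPv : ∀ c : Fin 3 → L, P.mulVec c = c 0 • u + c 1 • e + c 2 • f := by
      intro c; ext i; simp [P, Matrix.mulVec, dotProduct, Fin.sum_univ_three]; ring
    have hP : P.det ≠ 0 := by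
      intro h0
      obtain ⟨c, hc, hc0⟩ := Matrix.exists_mulVec_eq_zero_iff.2 h0
      rw [hPv] at hc0
      have h1 := congrArg N.mulVec hc0
      simp only [Matrix.mulVec_add, Matrix.mulVec_smul, hf, ← hu, Matrix.mulVec_zero] at h1
      rw [show N.mulVec u = 0 from hNN e] at h1
      simp [he] at h1
      rw [h1] at hc0
      simp at hc0
      have h2 : c 2 = 0 := by
        by_contra h2
        apply hfu
        rw [Submodule.mem_span_singleton]
        refine ⟨-(c 2)⁻¹ * c 0, ?_⟩
        have : f = (c 2)⁻¹ • (c 2 • f) := by rw [smul_smul, inv_mul_cancel₀ h2, one_smul]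
        rw [this, eq_neg_of_add_eq_zero_right hc0, smul_neg, smul_smul, neg_mul, neg_smul]
      rw [h2] at hc0
      simp [he] at hc0
      apply hc
      funext i; fin_cases i <;> assumption
    have hconj : N * P = P * !![0,1,0;0,0,0;0,0,0] := by
      ext i j
      have a1 := congrFun (hNN e) i
      rw [← hu] at a1
      have a2 := congrFun hf i
      have a3 := congrFun hu i
      simp only [Matrix.mulVec, dotProduct, Fin.sum_univ_three, Pi.zero_apply] at a1 a2 a3
      fin_cases j <;> simp [P, Matrix.mul_apply, Fin.sum_univ_three]
      · exact a1
      · exact a3.symm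
      · exact a2
    have h' := h.conj hconj
    simp [Syz, Fin.sum_univ_three, lsub_X] at h'
    exact syz_coord2 (lsub_isHomogeneous P hom) hd (Sm_lsub hs hP) h'
  · exfalso
    obtain ⟨e, he⟩ : ∃ e, (N ^ 2).mulVec e ≠ 0 := by
      by_contra hc
      push Not at hc
      exact h2 (by ext i j; have := congrFun (hc (Pi.single j 1)) i; simpa using this)
    set f := N.mulVec e with hf
    set u := N.mulVec f with hu
    have hu' : u = (N ^ 2).mulVec e := by rw [hu, hf, Matrix.mulVec_mulVec, sq]
    have hNu : N.mulVec u = 0 := by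
      rw [hu', Matrix.mulVec_mulVec, ← pow_succ', h3, Matrix.zero_mulVec]
    rw [← hu'] at he
    let P : Matrix (Fin 3) (Fin 3) L := Matrix.of fun i j => (![u, f, e] j) i
    have hPv : ∀ c : Fin 3 → L, P.mulVec c = c 0 • u + c 1 • f + c 2 • e := by
      intro c; ext i; simp [P, Matrix.mulVec, dotProduct, Fin.sum_univ_three]; ring
    have hP : P.det ≠ 0 := by
      intro h0
      obtain ⟨c, hc, hc0⟩ := Matrix.exists_mulVec_eq_zero_iff.2 h0
      rw [hPv] at hc0
      have h1 := congrArg N.mulVec hc0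
      simp only [Matrix.mulVec_add, Matrix.mulVec_smul, ← hf, ← hu, hNu, Matrix.mulVec_zero,
        smul_zero, zero_add] at h1
      have h2 := congrArg N.mulVec h1
      simp only [Matrix.mulVec_add, Matrix.mulVec_smul, ← hf, ← hu, hNu, Matrix.mulVec_zero,
        smul_zero, zero_add] at h2
      simp [he] at h2
      rw [h2] at h1 hc0
      simp [he] at h1
      rw [h1] at hc0
      simp [he] at hc0
      apply hc
      funext i; fin_cases i <;> assumption
    have hconj : N * P = P * !![0,1,0;0,0,1;0,0,0] := by
      ext i j
      have a1 := congrFun hNu i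
      have a2 := congrFun hf i
      have a3 := congrFun hu i
      simp only [Matrix.mulVec, dotProduct, Fin.sum_univ_three, Pi.zero_apply] at a1 a2 a3
      fin_cases j <;> simp [P, Matrix.mul_apply, Fin.sum_univ_three]
      · exact a1
      · exact a3.symm
      · exact a2.symm
    have h' := h.conj hconj
    simp [Syz, Fin.sum_univ_three, lsub_X] at h'
    exact syz_coord3 (lsub_isHomogeneous P hom) hd (Sm_lsub hs hP) h'

lemma syz_eig {Ω : MvPolynomial (Fin 3) L} {d : ℕ} (hom : Ω.IsHomogeneous d) (hd : 3 ≤ d)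
    (hs : Sm Ω) {N : Matrix (Fin 3) (Fin 3) L} (h : Syz N Ω) {a : L}
    (ha : N.charpoly.IsRoot a) : N.charpoly.IsRoot (-(d - 1 : ℕ) * a) := by
  have key : ∀ b : L, N.charpoly.IsRoot b ↔ (Matrix.scalar (Fin 3) b - N).det = 0 := by
    intro b; rw [Polynomial.IsRoot, Matrix.eval_charpoly]
  rw [key] at ha ⊢
  obtain ⟨v, hv, hv0⟩ := Matrix.exists_mulVec_eq_zero_iff.2 ha
  apply Matrix.exists_vecMul_eq_zero_iff.1
  refine ⟨fun i => eval v (pderiv i Ω), fun h0 => hv (hs v fun j => congrFun h0 j), ?_⟩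
  have hv1 : ∀ i, N i 0 * v 0 + N i 1 * v 1 + N i 2 * v 2 = a * v i := by
    intro i
    have := congrFun hv0 i
    rw [Matrix.sub_mulVec] at this
    simp [Matrix.mulVec, dotProduct, Fin.sum_univ_three, Matrix.diagonal_apply] at this
    fin_cases i <;> simp at this ⊢ <;> linear_combination -this
  funext j
  have e := euler_eval (hom.pderiv (i := j)) v
  have h1 := congrArg (fun f => eval v (pderiv j f)) h
  simp only [Fin.sum_univ_three, lsub_X, map_add, Derivation.leibniz, smul_eq_mul, map_mul, eval_C,
    eval_X, pderiv_C, mul_zero, add_zero, hv1, pderiv_X, map_zero] at h1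
  rw [pderiv_comm' 0 j, pderiv_comm' 1 j, pderiv_comm' 2 j] at e
  rw [Matrix.vecMul_sub]
  simp [Matrix.vecMul, dotProduct, Fin.sum_univ_three, Matrix.diagonal_apply]
  fin_cases j <;> simp at h1 e ⊢ <;> linear_combination -h1 + a * e

theorem syz_zero [IsAlgClosed L] {Ω : MvPolynomial (Fin 3) L} {d : ℕ} (hom : Ω.IsHomogeneous d)
    (hd : 3 ≤ d) (hs : Sm Ω) {N : Matrix (Fin 3) (Fin 3) L} (h : Syz N Ω) : N = 0 := by
  classical
  apply syz_nilp hom hd hs h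
  have hroot : ∀ a, N.charpoly.IsRoot a → a = 0 := by
    intro a ha
    by_contra ha0
    have hit : ∀ k : ℕ, N.charpoly.IsRoot ((-(d - 1 : ℕ)) ^ k * a) := by
      intro k
      induction k with
      | zero => simpa using ha
      | succ k ih =>
        have := syz_eig hom hd hs h ih
        rw [pow_succ']
        convert this using 1
        ring
    have hinj : Function.Injective fun k : ℕ => ((-(d - 1 : ℕ) : L)) ^ k * a := by
      intro k l hkl
      have h1 := mul_right_cancel₀ ha0 hkl
      have h2 : ((d - 1 : ℕ) : L) ^ (2 * k) = ((d - 1 : ℕ) : L) ^ (2 * l) := by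
        have := congrArg (· ^ 2) h1
        simp only [← pow_mul] at this
        rw [mul_comm k, mul_comm l, pow_mul, pow_mul, neg_sq, ← pow_mul, ← pow_mul] at this
        exact this
      have h3 : (d - 1) ^ (2 * k) = (d - 1) ^ (2 * l) := by exact_mod_cast h2
      have := Nat.pow_right_injective (show 2 ≤ d - 1 by omega) h3
      omega
    have hfin : (N.charpoly.roots.toFinset : Set L).Finite := Finset.finite_toSet _
    apply Set.infinite_range_of_injective hinj
    refine hfin.subset ?_
    rintro _ ⟨k, rfl⟩
    simpa [(Matrix.charpoly_monic N).ne_zero] using hit k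
  have hsp := IsAlgClosed.splits N.charpoly
  have hch : N.charpoly = Polynomial.X ^ 3 := by
    have h1 := hsp.eq_prod_roots_of_monic (Matrix.charpoly_monic N)
    have h2 : N.charpoly.roots = Multiset.replicate 3 0 := by
      rw [Multiset.eq_replicate]
      refine ⟨?_, fun b hb => hroot b (Polynomial.isRoot_of_mem_roots hb)⟩
      rw [← hsp.natDegree_eq_card_roots, Matrix.charpoly_natDegree_eq_dim]
      rfl
    rw [h1, h2]; simp; ring
  have := Matrix.aeval_self_charpoly N
  rw [hch] at this
  simpa using this

end
end PotAut


namespace PotAut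
open MvPolynomial

/-- `M` preserves `Ω` up to the factor `det M`. -/
def Pres {R : Type*} [CommRing R] (Ω : MvPolynomial (Fin 3) R) (M : Matrix (Fin 3) (Fin 3) R) :
    Prop := lsub M Ω = C M.det * Ω

section
variable {R : Type*} [CommRing R]

lemma Pres.mul {Ω : MvPolynomial (Fin 3) R} {A B : Matrix (Fin 3) (Fin 3) R}
    (hA : Pres Ω A) (hB : Pres Ω B) : Pres Ω (A * B) := by
  unfold Pres at *
  rw [lsub_mul, hA, map_mul, hB, lsub_C, Matrix.det_mul, C_mul, mul_assoc]

lemma Pres.one {Ω : MvPolynomial (Fin 3) R} : Pres Ω 1 := by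
  simp [Pres, lsub_one]

lemma Pres.inv' {Ω : MvPolynomial (Fin 3) R} {A B : Matrix (Fin 3) (Fin 3) R}
    (hA : Pres Ω A) (hAB : A * B = 1) : Pres Ω B := by
  have h1 : lsub B (lsub A Ω) = Ω := by rw [← lsub_mul, hAB, lsub_one]
  rw [hA, map_mul, lsub_C] at h1
  have h2 : B.det * A.det = 1 := by rw [mul_comm, ← Matrix.det_mul, hAB, Matrix.det_one]
  unfold Pres
  calc lsub B Ω = C (B.det * A.det) * lsub B Ω := by rw [h2]; simp
    _ = C B.det * (C A.det * lsub B Ω) := by rw [C_mul, mul_assoc]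
    _ = _ := by rw [h1]

lemma taylor1 (f : MvPolynomial (Fin 3) R) (h : Fin 3 → MvPolynomial (Fin 3) R)
    (hh : ∀ i j, h i * h j = 0) :
    aeval (fun i => X i + h i) f = f + ∑ i, h i * pderiv i f := by
  induction f using MvPolynomial.induction_on with
  | C a => simp [algebraMap_eq]
  | add p q hp hq => rw [map_add, hp, hq]; simp [mul_add, Finset.sum_add_distrib]; ring
  | mul_X p k hp =>
    rw [map_mul, hp, aeval_X]
    simp only [Derivation.leibniz, smul_eq_mul, pderiv_X, Fin.sum_univ_three]
    have a0 := hh 0 k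
    have a1 := hh 1 k
    have a2 := hh 2 k
    fin_cases k <;> simp at a0 a1 a2 ⊢ <;>
    linear_combination (pderiv 0 p) * a0 + (pderiv 1 p) * a1 + (pderiv 2 p) * a2

lemma lsub_sub_smul_one (n : Matrix (Fin 3) (Fin 3) R) (c : R) (i : Fin 3) :
    lsub (n - c • (1 : Matrix (Fin 3) (Fin 3) R)) (X i) = lsub n (X i) - C c * X i := by
  have e : ∑ j, C ((c • (1 : Matrix (Fin 3) (Fin 3) R)) i j) * X j
      = (C c * X i : MvPolynomial (Fin 3) R) := by
    rw [Finset.sum_eq_single i]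
    · simp
    · intro j _ hj
      simp [Matrix.one_apply, hj.symm]
    · simp
  simp only [lsub_X, Matrix.sub_apply, C_sub, sub_mul, Finset.sum_sub_distrib, e]

variable {L : Type*} [Field L] [CharZero L] [IsAlgClosed L] [Algebra L R]

lemma scalar_case {Ω : MvPolynomial (Fin 3) L} {d : ℕ} (hom : Ω.IsHomogeneous d) (hd : 4 ≤ d)
    (hs : Sm Ω) (n : Matrix (Fin 3) (Fin 3) L)
    (h3 : ∑ i, lsub n (X i) * pderiv i Ω = C (n 0 0 + n 1 1 + n 2 2) * Ω) : n = 0 := by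
  obtain ⟨t, ht⟩ : ∃ t, t = n 0 0 + n 1 1 + n 2 2 := ⟨_, rfl⟩
  rw [← ht] at h3
  have hd0 : (d : L) ≠ 0 := by rw [Nat.cast_ne_zero]; omega
  have h4 : Syz (n - (t / d) • (1 : Matrix (Fin 3) (Fin 3) L)) Ω := by
    have he := hom.sum_X_mul_pderiv
    unfold Syz
    simp only [lsub_sub_smul_one, sub_mul, Finset.sum_sub_distrib]
    rw [h3]
    simp only [mul_assoc]
    rw [← Finset.mul_sum, he, nsmul_eq_mul, ← mul_assoc, ← map_natCast C, ← C_mul,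
      div_mul_cancel₀ _ hd0, sub_self]
  have h5 := syz_zero hom (by omega) hs h4
  rw [sub_eq_zero] at h5
  have t0 : t = 0 := by
    have : t = t / d + t / d + t / d := by
      conv_lhs => rw [ht, h5]
      simp
    have h6 : t * ((d : L) - 3) = 0 := by
      field_simp at this
      linear_combination this
    rcases mul_eq_zero.1 h6 with h | h
    · exact h
    · exfalso
      have : (d : L) = (3 : ℕ) := by push_cast; linear_combination h
      have := Nat.cast_injective this
      omega
  rw [t0] at h5
  simpa using h5

lemma infinitesimal {Ω : MvPolynomial (Fin 3) L} {d : ℕ} (hom : Ω.IsHomogeneous d) (hd : 4 ≤ d)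
    (hs : Sm Ω) (N : Matrix (Fin 3) (Fin 3) R) (hN : ∀ i j k l, N i j * N k l = 0)
    (hp : Pres (map (algebraMap L R) Ω) (1 + N)) : N = 0 := by
  have h1 : lsub (1 + N) (map (algebraMap L R) Ω) = map (algebraMap L R) Ω +
      ∑ i, lsub N (X i) * pderiv i (map (algebraMap L R) Ω) := by
    rw [← taylor1]
    · have e : (fun i => X i + lsub N (X i)) = (fun i => ∑ j, C ((1 + N) i j) * X j) := by
        funext i
        have e1 : ∑ j, C ((1 : Matrix (Fin 3) (Fin 3) R) i j) * X j
            = (X i : MvPolynomial (Fin 3) R) := by simp [Matrix.one_apply]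
        simp only [Matrix.add_apply, C_add, add_mul, Finset.sum_add_distrib, lsub_X, e1]
      rw [e]; rfl
    · intro i j
      rw [lsub_X, lsub_X, Finset.sum_mul_sum]
      refine Finset.sum_eq_zero fun k _ => Finset.sum_eq_zero fun l _ => ?_
      rw [mul_mul_mul_comm, ← C_mul, hN]; simp
  have hdet : (1 + N).det = 1 + (N 0 0 + N 1 1 + N 2 2) := by
    rw [Matrix.det_fin_three]
    simp
    have := hN
    linear_combination (1 + N 2 2) * hN 0 0 1 1 + hN 0 0 2 2 + hN 1 1 2 2
      - (1 + N 0 0) * hN 1 2 2 1 - (1 + N 2 2) * hN 0 1 1 0 + N 2 0 * hN 0 1 1 2 +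
      N 2 1 * hN 0 2 1 0 - (1 + N 1 1) * hN 0 2 2 0
  rw [Pres, h1, hdet, C_add, add_mul, C_1, one_mul] at hp
  have h2 := add_left_cancel hp
  have key : ∀ l : R →ₗ[L] L, ∀ i j, l (N i j) = 0 := by
    intro l
    set n : Matrix (Fin 3) (Fin 3) L := N.map l with hn
    have h3 : ∑ i, lsub n (X i) * pderiv i Ω = C (n 0 0 + n 1 1 + n 2 2) * Ω := by
      ext m
      have := congrArg (fun f => l (coeff m f)) h2
      simp only [Fin.sum_univ_three, lsub_X] at this
      simp only [pderiv_map, add_mul, mul_assoc, coeff_add, coeff_C_mul,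
        ← map_X (algebraMap L R), ← map_mul, coeff_map] at this
      simp only [mul_comm _ (algebraMap L R _), ← Algebra.smul_def, map_add, smul_add,
        map_smul] at this
      simp only [smul_eq_mul] at this
      simp only [Fin.sum_univ_three, lsub_X, add_mul, mul_assoc, coeff_add, coeff_C_mul, hn,
        Matrix.map_apply]
      linear_combination this
    have h5 := scalar_case hom hd hs n h3
    intro i j
    have := congrFun (congrFun h5 i) j
    simpa [hn] using this
  ext i j
  exact (Module.forall_dual_apply_eq_zero_iff L (N i j)).1 fun l => key l i j

lemma infinitesimal2 {Ω : MvPolynomial (Fin 3) L} {d : ℕ} (hom : Ω.IsHomogeneous d) (hd : 4 ≤ d)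
    (hs : Sm Ω) (I : Ideal R) (hI : I ^ 2 = ⊥) (A B : Matrix (Fin 3) (Fin 3) R)
    (hA : Pres (map (algebraMap L R) Ω) A) (hB : Pres (map (algebraMap L R) Ω) B)
    (uA : IsUnit A.det) (hAB : ∀ i j, A i j - B i j ∈ I) : A = B := by
  have e1 : A * A⁻¹ = 1 := Matrix.mul_nonsing_inv A uA
  have e2 : A⁻¹ * A = 1 := Matrix.nonsing_inv_mul A uA
  have hp := (hA.inv' e1).mul hB
  have e3 : A⁻¹ * B = 1 + A⁻¹ * (B - A) := by rw [mul_sub, e2]; abel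
  rw [e3] at hp
  have hmem : ∀ i j, (A⁻¹ * (B - A)) i j ∈ I := by
    intro i j
    rw [Matrix.mul_apply]
    refine I.sum_mem fun k _ => I.mul_mem_left _ ?_
    rw [Matrix.sub_apply, ← neg_sub]
    exact I.neg_mem (hAB k j)
  have := infinitesimal hom hd hs (A⁻¹ * (B - A)) (fun i j k l => by
    have := Ideal.mul_mem_mul (hmem i j) (hmem k l)
    rwa [← sq, hI, Ideal.mem_bot] at this) hp
  have h2 : A * (A⁻¹ * (B - A)) = 0 := by rw [this, mul_zero]
  rw [← mul_assoc, e1, one_mul, sub_eq_zero] at h2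
  exact h2.symm

end
end PotAut


namespace PotAut
open MvPolynomial

section
variable {L : Type*} [Field L]

abbrev BigRing (L : Type*) [Field L] := MvPolynomial (Option (Fin 3 × Fin 3)) L

noncomputable def genMat (L : Type*) [Field L] : Matrix (Fin 3) (Fin 3) (BigRing L) :=
  Matrix.of fun i j => X (some (i, j))

noncomputable def presPoly (Ω : MvPolynomial (Fin 3) L) : MvPolynomial (Fin 3) (BigRing L) :=
  lsub (genMat L) (map (algebraMap L (BigRing L)) Ω) -
    C (genMat L).det * map (algebraMap L (BigRing L)) Ω

noncomputable def presIdeal (Ω : MvPolynomial (Fin 3) L) : Ideal (BigRing L) :=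
  Ideal.span (Set.range (fun m => coeff m (presPoly Ω)) ∪ {(genMat L).det * X none - 1})

lemma presIdeal_iff (Ω : MvPolynomial (Fin 3) L) {R : Type*} [CommRing R] [Algebra L R]
    (φ : BigRing L →ₐ[L] R) :
    (∀ a ∈ presIdeal Ω, φ a = 0) ↔
      Pres (map (algebraMap L R) Ω) ((genMat L).map φ) ∧
      ((genMat L).map φ).det * φ (X none) = 1 := by
  have e0 : (φ : BigRing L →+* R).comp (algebraMap L (BigRing L)) = algebraMap L R :=
    φ.comp_algebraMap
  have e2 : φ (genMat L).det = ((genMat L).map φ).det := AlgHom.map_det φ _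
  have e1 : map (φ : BigRing L →+* R) (presPoly Ω) =
      lsub ((genMat L).map φ) (map (algebraMap L R) Ω) -
        C ((genMat L).map φ).det * map (algebraMap L R) Ω := by
    rw [presPoly, map_sub, map_lsub, map_mul, map_C, map_map, e0, ← e2]
    rfl
  have e3 : Pres (map (algebraMap L R) Ω) ((genMat L).map φ) ↔
      map (φ : BigRing L →+* R) (presPoly Ω) = 0 := by
    rw [e1, sub_eq_zero]; rfl
  have e4 : (∀ a ∈ presIdeal Ω, φ a = 0) ↔ presIdeal Ω ≤ RingHom.ker (φ : BigRing L →+* R) := by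
    rfl
  rw [e3, e4, presIdeal, Ideal.span_le, Set.union_subset_iff, MvPolynomial.ext_iff]
  constructor
  · rintro ⟨h1, h2⟩
    refine ⟨fun m => ?_, ?_⟩
    · rw [coeff_map, coeff_zero]; exact h1 ⟨m, rfl⟩
    · have : φ ((genMat L).det * X none - 1) = 0 := h2 rfl
      rw [map_sub, map_mul, e2, map_one, sub_eq_zero] at this
      exact this
  · rintro ⟨h1, h2⟩
    refine ⟨?_, ?_⟩
    · rintro _ ⟨m, rfl⟩
      have := h1 m
      rw [coeff_map, coeff_zero] at this
      exact this
    · rintro _ rfl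
      change φ ((genMat L).det * X none - 1) = 0
      rw [map_sub, map_mul, e2, map_one, sub_eq_zero]
      exact h2

variable [CharZero L] [IsAlgClosed L]

lemma presUnram {Ω : MvPolynomial (Fin 3) L} {d : ℕ} (hom : Ω.IsHomogeneous d) (hd : 4 ≤ d)
    (hs : Sm Ω) : Algebra.FormallyUnramified L (BigRing L ⧸ presIdeal Ω) := by
  rw [Algebra.FormallyUnramified.iff_comp_injective]
  intro R _ _ I hI f g hfg
  apply Ideal.Quotient.algHom_ext
  have hf := (presIdeal_iff Ω (f.comp (Ideal.Quotient.mkₐ L (presIdeal Ω)))).1 (fun a ha => by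
    rw [AlgHom.comp_apply, Ideal.Quotient.mkₐ_eq_mk, Ideal.Quotient.eq_zero_iff_mem.2 ha, map_zero])
  have hg := (presIdeal_iff Ω (g.comp (Ideal.Quotient.mkₐ L (presIdeal Ω)))).1 (fun a ha => by
    rw [AlgHom.comp_apply, Ideal.Quotient.mkₐ_eq_mk, Ideal.Quotient.eq_zero_iff_mem.2 ha, map_zero])
  have hdiff : ∀ x, f x - g x ∈ I := by
    intro x
    have := DFunLike.congr_fun hfg x
    simpa [Ideal.Quotient.eq] using this
  set F := f.comp (Ideal.Quotient.mkₐ L (presIdeal Ω)) with hF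
  set G := g.comp (Ideal.Quotient.mkₐ L (presIdeal Ω)) with hG
  have hM := infinitesimal2 hom hd hs I hI _ _ hf.1 hg.1
    (IsUnit.of_mul_eq_one _ hf.2) (fun i j => hdiff _)
  apply MvPolynomial.algHom_ext
  rintro (_ | ⟨i, j⟩)
  · have h1 := hf.2
    have h2 := hg.2
    rw [← hM] at h2
    exact (IsUnit.of_mul_eq_one _ h1).mul_left_cancel (h1.trans h2.symm)
  · exact congrFun (congrFun hM i) j

theorem pres_finite {Ω : MvPolynomial (Fin 3) L} {d : ℕ} (hom : Ω.IsHomogeneous d) (hd : 4 ≤ d)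
    (hs : Sm Ω) : {M : Matrix (Fin 3) (Fin 3) L | M.det ≠ 0 ∧ Pres Ω M}.Finite := by
  haveI := presUnram hom hd hs
  haveI : Algebra.FiniteType L (BigRing L ⧸ presIdeal Ω) :=
    Algebra.FiniteType.of_surjective (Ideal.Quotient.mkₐ L (presIdeal Ω))
      (Ideal.Quotient.mkₐ_surjective _ _)
  haveI := Algebra.FormallyUnramified.finite_of_free L (BigRing L ⧸ presIdeal Ω)
  haveI : Finite (BigRing L ⧸ presIdeal Ω →ₐ[L] L) := inferInstance
  refine (Set.finite_range (fun φ : (BigRing L ⧸ presIdeal Ω →ₐ[L] L) =>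
    (genMat L).map (φ.comp (Ideal.Quotient.mkₐ L (presIdeal Ω))))).subset ?_
  rintro M ⟨h1, h2⟩
  let φ : BigRing L →ₐ[L] L := aeval (fun o => o.elim (M.det)⁻¹ (fun p => M p.1 p.2))
  have hφ : (genMat L).map φ = M := by
    ext i j
    simp [genMat, φ]
  have h3 : ∀ a ∈ presIdeal Ω, φ a = 0 := by
    rw [presIdeal_iff, hφ]
    refine ⟨?_, ?_⟩
    · have : map (algebraMap L L) Ω = Ω := by
        rw [Algebra.algebraMap_self, map_id]
      rw [this]; exact h2
    · simp [φ, h1]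
  refine ⟨Ideal.Quotient.liftₐ _ φ h3, ?_⟩
  rw [← hφ]
  rfl
end
end PotAut


namespace PotAut
open MvPolynomial

section
variable {L : Type*} [Field L]

/-- two variable complete homogeneous polynomial -/
def h2 (b c : L) (n : ℕ) : L := ∑ q ∈ Finset.HasAntidiagonal.antidiagonal n, b ^ q.1 * c ^ q.2

/-- three variable complete homogeneous polynomial -/
def h3 (a b c : L) (n : ℕ) : L := ∑ p ∈ Finset.HasAntidiagonal.antidiagonal n, a ^ p.1 * h2 b c p.2

lemma h2_succ (b c : L) (n : ℕ) : h2 b c (n + 1) = b * h2 b c n + c ^ (n + 1) := by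
  rw [h2, Finset.Nat.sum_antidiagonal_succ, h2, Finset.mul_sum]
  simp only [pow_succ]
  rw [pow_zero, one_mul, add_comm]
  congr 1
  exact Finset.sum_congr rfl fun x _ => by ring

lemma h3_succ (a b c : L) (n : ℕ) : h3 a b c (n + 1) = a * h3 a b c n + h2 b c (n + 1) := by
  rw [h3, Finset.Nat.sum_antidiagonal_succ, h3, Finset.mul_sum]
  rw [pow_zero, one_mul, add_comm]
  congr 1
  exact Finset.sum_congr rfl fun x _ => by ring

lemma h2_mul (b c : L) (n : ℕ) : h2 b c n * (b - c) = b ^ (n + 1) - c ^ (n + 1) := by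
  induction n with
  | zero => simp [h2]
  | succ n ih => rw [h2_succ]; linear_combination b * ih

lemma h3_mul (a b c : L) (n : ℕ) : h3 a b c n * ((a - b) * (a - c) * (b - c)) =
    a ^ (n + 2) * (b - c) - b ^ (n + 2) * (a - c) + c ^ (n + 2) * (a - b) := by
  induction n with
  | zero => simp [h3, h2]; ring
  | succ n ih => rw [h3_succ]; linear_combination a * ih + (a - b) * (a - c) * h2_mul b c (n + 1)

lemma h2_same (a : L) (n : ℕ) : h2 a a n = (n + 1) * a ^ n := by
  induction n with
  | zero => simp [h2]
  | succ n ih => rw [h2_succ, ih]; push_cast; ring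

lemma h3_same2 (a c : L) (n : ℕ) : h3 a a c n * (a - c) ^ 2 =
    (n + 1) * a ^ (n + 2) - (n + 2) * a ^ (n + 1) * c + c ^ (n + 2) := by
  induction n with
  | zero => simp [h3, h2]; ring
  | succ n ih =>
    rw [h3_succ]; push_cast; linear_combination a * ih + (a - c) * h2_mul a c (n + 1)

lemma h3_same3 (a : L) (n : ℕ) : 2 * h3 a a a n = (n + 1) * (n + 2) * a ^ n := by
  induction n with
  | zero => simp [h3, h2]
  | succ n ih =>
    rw [h3_succ, h2_same]; push_cast; linear_combination a * ih

noncomputable def lsubV (n : ℕ) (M : Matrix (Fin 3) (Fin 3) L) :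
    homogeneousSubmodule (Fin 3) L n →ₗ[L] homogeneousSubmodule (Fin 3) L n :=
  (lsub M).toLinearMap.restrict (fun f hf => lsub_isHomogeneous M hf)

lemma lsubV_coe (n : ℕ) (M : Matrix (Fin 3) (Fin 3) L) (f : homogeneousSubmodule (Fin 3) L n) :
    (lsubV n M f : MvPolynomial (Fin 3) L) = lsub M f := rfl

lemma lsubV_mul (n : ℕ) (A B : Matrix (Fin 3) (Fin 3) L) :
    lsubV n (A * B) = lsubV n B * lsubV n A := by
  ext f : 2
  rw [lsubV_coe, lsub_mul]; rfl

lemma lsubV_one (n : ℕ) : lsubV n (1 : Matrix (Fin 3) (Fin 3) L) = 1 := by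
  ext f : 2
  rw [lsubV_coe, lsub_one]; rfl

abbrev Exps (n : ℕ) := {m : Fin 3 →₀ ℕ // m ∈ Finset.finsuppAntidiag Finset.univ n}

lemma mem_exps {m : Fin 3 →₀ ℕ} {n : ℕ} : m ∈ Finset.finsuppAntidiag Finset.univ n ↔
    m 0 + m 1 + m 2 = n := by
  rw [Finset.mem_finsuppAntidiag, Fin.sum_univ_three]
  simp

lemma degree3 (m : Fin 3 →₀ ℕ) : m.degree = m 0 + m 1 + m 2 := by
  rw [Finsupp.degree_eq_sum, Fin.sum_univ_three]

noncomputable def homEquiv (n : ℕ) : homogeneousSubmodule (Fin 3) L n ≃ₗ[L] (Exps n → L) where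
  toFun f m := coeff m.1 f.1
  map_add' f g := by ext m; simp
  map_smul' c f := by ext m; simp
  invFun g := ⟨∑ m : Exps n, monomial m.1 (g m), by
    refine Submodule.sum_mem _ fun m _ => ?_
    refine isHomogeneous_monomial _ ?_
    rw [degree3]; exact mem_exps.1 m.2⟩
  left_inv f := by
    ext m
    simp only [coeff_sum, coeff_monomial]
    by_cases hm : m ∈ Finset.finsuppAntidiag Finset.univ n
    · rw [Finset.sum_eq_single ⟨m, hm⟩]
      · simp
      · intro b _ hb
        rw [if_neg]; rintro rfl; exact hb rfl
      · simp
    · rw [Finset.sum_eq_zero]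
      · symm
        apply IsHomogeneous.coeff_eq_zero f.2
        rw [degree3]; rwa [mem_exps] at hm
      · intro b _
        rw [if_neg]; rintro rfl; exact hm b.2
  right_inv g := by
    ext m
    simp only [coeff_sum, coeff_monomial]
    rw [Finset.sum_eq_single m]
    · simp
    · intro b _ hb
      rw [if_neg]; intro h; exact hb (Subtype.ext h)
    · simp

instance (n : ℕ) : FiniteDimensional L (homogeneousSubmodule (Fin 3) L n) :=
  Module.Finite.equiv (homEquiv (L := L) n).symm

lemma trace_diag (n : ℕ) (a : Fin 3 → L) :
    LinearMap.trace L _ (lsubV n (Matrix.diagonal a)) = h3 (a 0) (a 1) (a 2) n := by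
  classical
  rw [LinearMap.trace_eq_matrix_trace L (Module.Basis.ofEquivFun (homEquiv (L := L) n))]
  simp only [Matrix.trace, Matrix.diag_apply, LinearMap.toMatrix_apply, Module.Basis.coe_ofEquivFun,
    Module.Basis.ofEquivFun_repr_apply]
  have : ∀ m : Exps n, homEquiv n (lsubV n (Matrix.diagonal a)
      ((homEquiv (L := L) n).symm (Pi.single m 1))) m = ∏ i, a i ^ m.1 i := by
    intro m
    have e1 : homEquiv n ((homEquiv (L := L) n).symm (Pi.single m 1)) m = 1 := by simp
    change coeff m.1 (lsub (Matrix.diagonal a) ((homEquiv (L := L) n).symm (Pi.single m 1)).1) = _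
    change coeff m.1 _ = _ at e1
    rw [lsub_diag_coeff, e1, mul_one]
  rw [Finset.sum_congr rfl (fun m _ => this m)]
  simp only [h3, h2, Finset.mul_sum]
  rw [Finset.sum_sigma', Finset.sum_coe_sort (Finset.finsuppAntidiag Finset.univ n)
    (fun m : Fin 3 →₀ ℕ => ∏ i, a i ^ m i)]
  refine Finset.sum_bij' (fun m _ => ⟨(m 0, m 1 + m 2), (m 1, m 2)⟩)
    (fun p _ => Finsupp.equivFunOnFinite.symm ![p.1.1, p.2.1, p.2.2]) ?_ ?_ ?_ ?_ ?_
  · intro m hm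
    rw [mem_exps] at hm
    simp; omega
  · rintro ⟨⟨i, j⟩, ⟨k, l⟩⟩ hp
    rw [mem_exps]
    simp at hp ⊢
    omega
  · intro m hm
    ext i
    fin_cases i <;> simp
  · rintro ⟨⟨i, j⟩, ⟨k, l⟩⟩ hp
    simp at hp
    simp [hp]
  · intro m hm
    simp [Fin.prod_univ_three, mul_assoc]

lemma trace_conj_diag (n : ℕ) (a : Fin 3 → L) {M P : Matrix (Fin 3) (Fin 3) L} (hP : P.det ≠ 0)
    (h : M * P = P * Matrix.diagonal a) :
    LinearMap.trace L _ (lsubV n M) = h3 (a 0) (a 1) (a 2) n := by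
  rw [← trace_diag]
  have e : M = P * (Matrix.diagonal a * P⁻¹) := by
    rw [← mul_assoc, ← h, mul_assoc, Matrix.mul_nonsing_inv _ hP.isUnit, mul_one]
  rw [e, lsubV_mul, LinearMap.trace_mul_comm, ← lsubV_mul, mul_assoc,
    Matrix.nonsing_inv_mul _ hP.isUnit, mul_one]

end
end PotAut


namespace PotAut
open MvPolynomial

section
variable {L : Type*} [Field L]

lemma eval_smul' {f : MvPolynomial (Fin 3) L} {n : ℕ} (hf : f.IsHomogeneous n) (c : L)
    (v : Fin 3 → L) : eval (c • v) f = c ^ n * eval v f := by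
  simp only [eval_eq', Finset.mul_sum]
  refine Finset.sum_congr rfl fun m hm => ?_
  have : m 0 + m 1 + m 2 = n := by
    rw [← degree3]
    by_contra h
    exact (mem_support_iff.1 hm) (hf.coeff_eq_zero h)
  simp only [Fin.prod_univ_three, Pi.smul_apply, smul_eq_mul]
  rw [← this]; ring

variable {Ω : MvPolynomial (Fin 3) L} {d : ℕ} {a : Fin 3 → L}

lemma eig_val (hom : Ω.IsHomogeneous d) {χ : L}
    (hD : lsub (Matrix.diagonal a) Ω = C χ * Ω) {v : Fin 3 → L} {μ : L}
    (hv : (Matrix.diagonal a).mulVec v = μ • v) : μ ^ d * eval v Ω = χ * eval v Ω := by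
  have := congrArg (eval v) hD
  rw [eval_lsub, hv, eval_smul' hom, map_mul, eval_C] at this
  exact this

lemma eig_grad (hom : Ω.IsHomogeneous d) {χ : L}
    (hD : lsub (Matrix.diagonal a) Ω = C χ * Ω) {v : Fin 3 → L} {μ : L}
    (hv : (Matrix.diagonal a).mulVec v = μ • v) (j : Fin 3) :
    a j * μ ^ (d - 1) * eval v (pderiv j Ω) = χ * eval v (pderiv j Ω) := by
  have := congrArg (fun f => eval v (pderiv j f)) hD
  simp only [pderiv_lsub, map_sum, map_mul, eval_C, eval_lsub, hv, eval_smul' hom.pderiv,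
    Derivation.leibniz, pderiv_C, smul_zero, add_zero, smul_eq_mul] at this
  rw [Finset.sum_eq_single j] at this
  · simpa [mul_assoc] using this
  · intro b _ hb
    simp [Matrix.diagonal_apply, hb]
  · simp

lemma diag_single (i : Fin 3) :
    (Matrix.diagonal a).mulVec (Pi.single i 1) = a i • (Pi.single i 1 : Fin 3 → L) := by
  ext j
  rw [Matrix.mulVec_diagonal]
  by_cases h : j = i
  · subst h; simp
  · simp [h]

lemma vertex [CharZero L] (hom : Ω.IsHomogeneous d) (hd : 1 ≤ d) (hs : Sm Ω) {χ : L}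
    (hD : lsub (Matrix.diagonal a) Ω = C χ * Ω) (i : Fin 3) :
    (eval (Pi.single i 1) Ω ≠ 0 ∧ a i ^ d = χ) ∨
    (eval (Pi.single i 1) Ω = 0 ∧ ∃ j, j ≠ i ∧ a j * a i ^ (d - 1) = χ) := by
  by_cases h : eval (Pi.single i 1) Ω = 0
  · right
    refine ⟨h, ?_⟩
    by_contra hc
    push Not at hc
    have hz : ∀ j, j ≠ i → eval (Pi.single i 1) (pderiv j Ω) = 0 := by
      intro j hj
      by_contra h2
      exact hc j hj (mul_right_cancel₀ h2 (eig_grad hom hD (diag_single i) j))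
    have := hs (Pi.single i 1) (fun j => by
      by_cases hj : j = i
      · subst hj
        have := congrArg (eval (Pi.single j 1)) hom.sum_X_mul_pderiv
        rw [map_sum, Finset.sum_eq_single j] at this
        · simpa [h] using this
        · intro b _ hb
          simp [hb]
        · simp
      · exact hz j hj)
    have := congrFun this i
    simp at this
  · left
    exact ⟨h, mul_right_cancel₀ h (eig_val hom hD (diag_single i))⟩

open Classical in
noncomputable def on (Ω : MvPolynomial (Fin 3) L) (i : Fin 3) : L :=
  if eval (Pi.single i 1) Ω = 0 then 1 else 0

lemma fin3_univ : ∀ i j k : Fin 3, i ≠ j → i ≠ k → j ≠ k →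
    (Finset.univ : Finset (Fin 3)) = {i, j, k} := by decide

lemma fin3_or : ∀ i j k l : Fin 3, i ≠ j → i ≠ k → j ≠ k → l ≠ i → l = j ∨ l = k := by decide

lemma contrib [CharZero L] (hom : Ω.IsHomogeneous d) (hd : 1 ≤ d) (hs : Sm Ω) (ha : ∀ i, a i ≠ 0)
    (hD : lsub (Matrix.diagonal a) Ω = C (a 0 * a 1 * a 2) * Ω) (i j k : Fin 3)
    (hij : i ≠ j) (hik : i ≠ k) (hjk : j ≠ k) :
    a i ^ (d - 1) + a i ^ 2 * a j * a k * ((a i)⁻¹) ^ (d - 1) =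
     a i ^ 2 + a j * a k - on Ω i * ((a i - a j) * (a i - a k)) := by
  have hi := ha i
  have hj := ha j
  have hk := ha k
  have hprod : a 0 * a 1 * a 2 = a i * a j * a k := by
    rw [← Fin.prod_univ_three a]
    have : (Finset.univ : Finset (Fin 3)) = {i, j, k} :=
      fin3_univ i j k hij hik hjk
    rw [this, Finset.prod_insert, Finset.prod_pair hjk, mul_assoc]
    simp [hij, hik]
  rw [hprod] at hD
  have conc : ∀ q : L, a i ^ (d - 1) = q → q ≠ 0 →
     q + a i ^ 2 * a j * a k / q = a i ^ 2 + a j * a k - on Ω i * ((a i - a j) * (a i - a k)) →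
      a i ^ (d - 1) + a i ^ 2 * a j * a k * ((a i)⁻¹) ^ (d - 1) =
     a i ^ 2 + a j * a k - on Ω i * ((a i - a j) * (a i - a k)) := by
    intro q h1 _ h2
    rw [inv_pow, h1, ← div_eq_mul_inv, h2]
  rcases vertex hom hd hs hD i with ⟨h, h1⟩ | ⟨h, l, hl, h1⟩
  · have e : a i ^ (d - 1) = a j * a k := by
      have : a i ^ d = a i * a i ^ (d - 1) := by
        rw [← pow_succ']; congr 1; omega
      rw [this] at h1
      apply mul_left_cancel₀ hi; rw [h1]; ring
    refine conc _ e (mul_ne_zero hj hk) ?_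
    rw [on, if_neg h]; field_simp; ring
  · have hl' : l = j ∨ l = k := fin3_or i j k l hij hik hjk hl
    rcases hl' with rfl | rfl
    · have e : a i ^ (d - 1) = a i * a k := by
        apply mul_left_cancel₀ hj; rw [h1]; ring
      refine conc _ e (mul_ne_zero hi hk) ?_
      rw [on, if_pos h]; field_simp; ring
    · have e : a i ^ (d - 1) = a i * a j := by
        apply mul_left_cancel₀ hk; rw [h1]; ring
      refine conc _ e (mul_ne_zero hi hj) ?_
      rw [on, if_pos h]; field_simp; ring

lemma trace_distinct [CharZero L] (hom : Ω.IsHomogeneous d) (hd : 3 ≤ d) (hs : Sm Ω)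
    (ha : ∀ i, a i ≠ 0)
    (hD : lsub (Matrix.diagonal a) Ω = C (a 0 * a 1 * a 2) * Ω)
    (h01 : a 0 ≠ a 1) (h02 : a 0 ≠ a 2) (h12 : a 1 ≠ a 2) :
    h3 (a 0) (a 1) (a 2) (d - 3) + h3 (a 0)⁻¹ (a 1)⁻¹ (a 2)⁻¹ (d - 3) =
      2 - (on Ω 0 + on Ω 1 + on Ω 2) := by
  have c0 := contrib hom (by omega) hs ha hD 0 1 2 (by decide) (by decide) (by decide)
  have c1 := contrib hom (by omega) hs ha hD 1 0 2 (by decide) (by decide) (by decide)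
  have c2 := contrib hom (by omega) hs ha hD 2 0 1 (by decide) (by decide) (by decide)
  have e1 := h3_mul (a 0) (a 1) (a 2) (d - 3)
  have e2 := h3_mul (a 0)⁻¹ (a 1)⁻¹ (a 2)⁻¹ (d - 3)
  have hdd : d - 3 + 2 = d - 1 := by omega
  rw [hdd] at e1 e2
  have n0 := ha 0
  have n1 := ha 1
  have n2 := ha 2
  generalize on Ω 0 = o0 at *
  generalize on Ω 1 = o1 at *
  generalize on Ω 2 = o2 at *
  generalize h3 (a 0) (a 1) (a 2) (d - 3) = H at *
  generalize h3 (a 0)⁻¹ (a 1)⁻¹ (a 2)⁻¹ (d - 3) = H' at *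
  generalize (a 0)⁻¹ ^ (d - 1) = A' at *
  generalize (a 1)⁻¹ ^ (d - 1) = B' at *
  generalize (a 2)⁻¹ ^ (d - 1) = C' at *
  generalize a 0 ^ (d - 1) = A at *
  generalize a 1 ^ (d - 1) = B at *
  generalize a 2 ^ (d - 1) = C at *
  generalize a 0 = x at *
  generalize a 1 = y at *
  generalize a 2 = z at *
  have hΔ : (x - y) * (x - z) * (y - z) ≠ 0 :=
    mul_ne_zero (mul_ne_zero (sub_ne_zero.2 h01) (sub_ne_zero.2 h02)) (sub_ne_zero.2 h12)
  have e3 : H' * ((x - y) * (x - z) * (y - z)) =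
      x ^ 2 * y * z * A' * (y - z) - y ^ 2 * x * z * B' * (x - z)
        + z ^ 2 * x * y * C' * (x - y) := by
    field_simp at e2
    linear_combination - e2
  apply mul_right_cancel₀ hΔ
  linear_combination e1 + e3 + (y - z) * c0 - (x - z) * c1 + (x - y) * c2
end
end PotAut


namespace PotAut
open MvPolynomial

section
variable {L : Type*} [Field L]

/-- restriction to a line -/
noncomputable def rl (v w : Fin 3 → L) : MvPolynomial (Fin 3) L →ₐ[L] Polynomial L :=
  aeval (fun i => Polynomial.C (v i) + Polynomial.C (w i) * Polynomial.X)

lemma rl_eval (v w : Fin 3 → L) (t : L) (f : MvPolynomial (Fin 3) L) :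
    (rl v w f).eval t = eval (v + t • w) f := by
  induction f using MvPolynomial.induction_on with
  | C a => simp [rl]
  | add p q hp hq => simp [hp, hq]
  | mul_X p i hp =>
    rw [map_mul, map_mul, Polynomial.eval_mul, hp, eval_X]
    have : (rl v w (X i)).eval t = v i + t * w i := by
      simp [rl]; ring
    rw [this]; simp

lemma rl_deriv (v w : Fin 3 → L) (f : MvPolynomial (Fin 3) L) :
    (rl v w f).derivative = ∑ i, Polynomial.C (w i) * rl v w (pderiv i f) := by
  induction f using MvPolynomial.induction_on with
  | C a => simp [rl]
  | add p q hp hq => simp [hp, hq, mul_add, Finset.sum_add_distrib]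
  | mul_X p k hp =>
    rw [map_mul, Polynomial.derivative_mul, hp]
    have e : rl v w (X k) = Polynomial.C (v k) + Polynomial.C (w k) * Polynomial.X := by simp [rl]
    simp only [Derivation.leibniz, smul_eq_mul, map_add, map_mul, pderiv_X, Fin.sum_univ_three, e]
    fin_cases k <;> simp <;> ring

noncomputable abbrev q0 : MvPolynomial (Fin 3) L →ₐ[L] Polynomial L := rl ![0, 1, 0] ![1, 0, 0]

lemma q0_eval (t : L) (f : MvPolynomial (Fin 3) L) : (q0 f).eval t = eval ![t, 1, 0] f := by
  rw [rl_eval]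
  congr 2
  ext i; fin_cases i <;> simp

lemma q0_eq (f : MvPolynomial (Fin 3) L) : q0 f = ∑ m ∈ f.support,
    Polynomial.C (coeff m f * 0 ^ m 2) * Polynomial.X ^ m 0 := by
  unfold q0 rl
  rw [aeval_eq_eval₂Hom, coe_eval₂Hom, eval₂_eq']
  refine Finset.sum_congr rfl fun m _ => ?_
  simp [Fin.prod_univ_three]
  ring

lemma hom_support {f : MvPolynomial (Fin 3) L} {n : ℕ} (hf : f.IsHomogeneous n)
    {m : Fin 3 →₀ ℕ} (hm : m ∈ f.support) : m 0 + m 1 + m 2 = n := by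
  rw [← degree3]
  by_contra h
  exact (mem_support_iff.1 hm) (hf.coeff_eq_zero h)

lemma single0 : (Pi.single 0 1 : Fin 3 → L) = ![1, 0, 0] := by
  ext i; fin_cases i <;> simp

lemma q0_coeff {f : MvPolynomial (Fin 3) L} {n : ℕ} (hf : f.IsHomogeneous n) :
    (q0 f).coeff n = eval (Pi.single 0 1) f := by
  rw [q0_eq, eval_eq', Polynomial.finset_sum_coeff]
  refine Finset.sum_congr rfl fun m hm => ?_
  have := hom_support hf hm
  rw [Polynomial.coeff_C_mul, Polynomial.coeff_X_pow, single0]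
  simp only [Fin.prod_univ_three]
  simp
  rcases Nat.eq_zero_or_pos (m 1) with h1 | h1 <;> rcases Nat.eq_zero_or_pos (m 2) with h2 | h2
  · simp [h1, h2]; intro h; omega
  · simp [h2.ne']
  · simp [h1.ne', h2]; intro h; omega
  · simp [h2.ne']

lemma q0_natDegree_le {f : MvPolynomial (Fin 3) L} {n : ℕ} (hf : f.IsHomogeneous n) :
    (q0 f).natDegree ≤ n := by
  rw [q0_eq]
  refine Polynomial.natDegree_sum_le_of_forall_le _ _ fun m hm => ?_
  refine (Polynomial.natDegree_C_mul_X_pow_le _ _).trans ?_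
  have := hom_support hf hm
  omega

lemma line_zero [IsAlgClosed L] {f : MvPolynomial (Fin 3) L} {n : ℕ} (hf : f.IsHomogeneous n)
    (hn : 1 ≤ n) : ∃ s t : L, (![s, t, 0] : Fin 3 → L) ≠ 0 ∧ eval ![s, t, 0] f = 0 := by
  by_cases h : eval (Pi.single 0 1) f = 0
  · refine ⟨1, 0, ?_, by rwa [← single0]⟩
    intro h; have := congrFun h 0; simp at this
  · have hc := q0_coeff hf
    obtain ⟨t, ht⟩ := IsAlgClosed.exists_root (q0 f) (fun hdeg => by
      have h1 : (q0 f).natDegree = 0 := Polynomial.natDegree_eq_of_degree_eq_some hdeg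
      apply h
      rw [← hc]
      exact Polynomial.coeff_eq_zero_of_natDegree_lt (by omega))
    refine ⟨t, 1, ?_, ?_⟩
    · intro h; have := congrFun h 1; simp at this
    · rw [← q0_eval]; exact ht

variable {Ω : MvPolynomial (Fin 3) L} {d : ℕ} {a : Fin 3 → L}

lemma line_nonzero [IsAlgClosed L] (hom : Ω.IsHomogeneous d) (hd : 2 ≤ d) (hs : Sm Ω) :
    ∃ s t : L, eval ![s, t, 0] Ω ≠ 0 := by
  by_contra hc
  push Not at hc
  haveI : Infinite L := IsAlgClosed.instInfinite
  obtain ⟨s, t, h0, h1⟩ := line_zero (hom.pderiv (i := 2)) (by omega)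
  apply h0
  apply hs
  have hrl : ∀ w : Fin 3 → L, w 2 = 0 → rl ![s, t, 0] w Ω = 0 := by
    intro w hw
    apply Polynomial.funext
    intro r
    rw [rl_eval, Polynomial.eval_zero]
    have : ![s, t, 0] + r • w = ![s + r * w 0, t + r * w 1, 0] := by
      ext i; fin_cases i <;> simp [hw]
    rw [this]; exact hc _ _
  have hdv : ∀ w : Fin 3 → L, w 2 = 0 → ∑ i, w i * eval ![s, t, 0] (pderiv i Ω) = 0 := by
    intro w hw
    have h2 := rl_deriv ![s, t, 0] w Ω
    rw [hrl w hw] at h2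
    have h3 := congrArg (Polynomial.eval 0) h2
    simp [Polynomial.eval_finset_sum, rl_eval] at h3
    exact h3.symm
  intro j
  match j with
  | 0 => simpa [Fin.sum_univ_three] using hdv ![1, 0, 0] (by simp)
  | 1 => simpa [Fin.sum_univ_three] using hdv ![0, 1, 0] (by simp)
  | 2 => exact h1

lemma grad2 (hom : Ω.IsHomogeneous d) (hd : 3 ≤ d)
    (ha : ∀ i, a i ≠ 0)
    (hD : lsub (Matrix.diagonal a) Ω = C (a 0 * a 1 * a 2) * Ω)
    (h01 : a 0 = a 1) (h02 : a 0 ≠ a 2) (hχ : a 0 ^ d = a 0 * a 1 * a 2) (s t : L) :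
    eval ![s, t, 0] (pderiv 2 Ω) = 0 := by
  have hv : (Matrix.diagonal a).mulVec ![s, t, 0] = a 0 • ![s, t, 0] := by
    ext i; rw [Matrix.mulVec_diagonal]; fin_cases i <;> simp [h01]
  have := eig_grad hom hD hv 2
  rw [← hχ] at this
  have e : a 0 ^ d = a 0 * a 0 ^ (d - 1) := by rw [← pow_succ']; congr 1; omega
  rw [e] at this
  by_contra hne
  have h1 := mul_right_cancel₀ hne this
  exact h02 (mul_right_cancel₀ (pow_ne_zero _ (ha 0)) h1).symm

lemma chi_eq (hom : Ω.IsHomogeneous d)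
    (hD : lsub (Matrix.diagonal a) Ω = C (a 0 * a 1 * a 2) * Ω)
    (h0 : eval (Pi.single 0 1) Ω ≠ 0) : a 0 ^ d = a 0 * a 1 * a 2 :=
  mul_right_cancel₀ h0 (eig_val hom hD (diag_single 0))

lemma q0_card [CharZero L] [IsAlgClosed L] (hom : Ω.IsHomogeneous d) (hd : 3 ≤ d) (hs : Sm Ω)
    (ha : ∀ i, a i ≠ 0)
    (hD : lsub (Matrix.diagonal a) Ω = C (a 0 * a 1 * a 2) * Ω)
    (h01 : a 0 = a 1) (h02 : a 0 ≠ a 2) (h0 : eval (Pi.single 0 1) Ω ≠ 0) :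
    Nat.card {t : L // eval ![t, 1, 0] Ω = 0} = d := by
  classical
  have hdeg : (q0 Ω).natDegree = d := by
    apply le_antisymm (q0_natDegree_le hom)
    apply Polynomial.le_natDegree_of_ne_zero
    rwa [q0_coeff hom]
  have hne : q0 Ω ≠ 0 := by
    intro h; rw [h, Polynomial.natDegree_zero] at hdeg; omega
  have hnd : (q0 Ω).roots.Nodup := by
    rw [Multiset.nodup_iff_count_le_one]
    intro t
    rw [Polynomial.count_roots]
    by_contra hc
    push Not at hc
    rw [Polynomial.one_lt_rootMultiplicity_iff_isRoot hne] at hc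
    obtain ⟨r1, r2⟩ := hc
    rw [Polynomial.IsRoot] at r1 r2
    rw [q0_eval] at r1
    rw [rl_deriv] at r2
    have g0 : eval ![t, 1, 0] (pderiv 0 Ω) = 0 := by
      simpa [Fin.sum_univ_three, ← q0_eval] using r2
    have g2 := grad2 hom hd ha hD h01 h02 (chi_eq hom hD h0) t 1
    have eu := euler_eval hom ![t, 1, 0]
    rw [r1, g0, g2] at eu
    have := hs ![t, 1, 0] (fun j => by
      match j with
      | 0 => exact g0
      | 1 => simpa using eu
      | 2 => exact g2)
    have := congrFun this 1
    simp at this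
  have hset : ∀ t, t ∈ (q0 Ω).roots.toFinset ↔ eval ![t, 1, 0] Ω = 0 := by
    intro t
    rw [Multiset.mem_toFinset, Polynomial.mem_roots hne, Polynomial.IsRoot, q0_eval]
  rw [← Nat.card_congr (Equiv.subtypeEquivRight hset), Nat.card_eq_fintype_card,
    Fintype.card_coe, Multiset.toFinset_card_of_nodup hnd, ← hdeg]
  exact (Polynomial.splits_iff_card_roots.1 (IsAlgClosed.splits _))

lemma trace_two [CharZero L] (hom : Ω.IsHomogeneous d) (hd : 3 ≤ d) (hs : Sm Ω)
    (ha : ∀ i, a i ≠ 0)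
    (hD : lsub (Matrix.diagonal a) Ω = C (a 0 * a 1 * a 2) * Ω)
    (h01 : a 0 = a 1) (h02 : a 0 ≠ a 2) (h0 : eval (Pi.single 0 1) Ω ≠ 0) :
    h3 (a 0) (a 1) (a 2) (d - 3) + h3 (a 0)⁻¹ (a 1)⁻¹ (a 2)⁻¹ (d - 3) =
      2 - (d + on Ω 2) := by
  have hχ := chi_eq hom hD h0
  have c2 := contrib hom (by omega) hs ha hD 2 0 1 (by decide) (by decide) (by decide)
  rw [← h01] at *
  have n0 := ha 0
  have n2 := ha 2
  have e1 := h3_same2 (a 0) (a 2) (d - 3)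
  have e2 := h3_same2 (a 0)⁻¹ (a 2)⁻¹ (d - 3)
  have hdd : d - 3 + 2 = d - 1 := by omega
  rw [hdd] at e1 e2
  have hpow : a 0 ^ (d - 3 + 1) = a 2 := by
    have : a 0 ^ d = a 0 ^ (d - 3 + 1) * (a 0 * a 0) := by
      rw [← sq, ← pow_add]; congr 1; omega
    rw [this, mul_comm] at hχ
    exact mul_left_cancel₀ (mul_ne_zero n0 n0) hχ
  have hpow' : a 0 ^ (d - 1) = a 2 * a 0 := by
    rw [← hdd, show d - 3 + 2 = d - 3 + 1 + 1 by omega, pow_succ, hpow]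
  rw [hpow, hpow'] at e1
  rw [inv_pow, inv_pow (a 0) (d - 3 + 1), hpow, hpow'] at e2
  have hk : ((d - 3 : ℕ) : L) = (d : L) - 3 := by push_cast [hd]; ring
  rw [hk] at e1 e2
  generalize on Ω 2 = o2 at *
  generalize h3 (a 0) (a 0) (a 2) (d - 3) = H at *
  generalize h3 (a 0)⁻¹ (a 0)⁻¹ (a 2)⁻¹ (d - 3) = H' at *
  generalize (a 2)⁻¹ ^ (d - 1) = C' at *
  generalize a 2 ^ (d - 1) = C at *
  generalize a 0 = x at *
  generalize a 2 = z at *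
  have hΔ : (x - z) ^ 2 ≠ 0 := pow_ne_zero _ (sub_ne_zero.2 h02)
  have e3 : H' * (x - z) ^ 2 = (d - 2) * x * z - (d - 1) * x ^ 2 + z ^ 2 * x * x * C' := by
    field_simp at e2
    linear_combination e2
  apply mul_right_cancel₀ hΔ
  linear_combination e1 + e3 + c2
end
end PotAut


namespace PotAut
open MvPolynomial

section
variable {L : Type*} [Field L]

lemma exists_diag [IsAlgClosed L] [CharZero L] {M : Matrix (Fin 3) (Fin 3) L} {k : ℕ} (hk : k ≠ 0)
    (hM : M ^ k = 1) : ∃ (P : Matrix (Fin 3) (Fin 3) L) (a : Fin 3 → L), P.det ≠ 0 ∧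
      M * P = P * Matrix.diagonal a := by
  have hsep : (Polynomial.X ^ k - 1 : Polynomial L).Separable :=
    Polynomial.X_pow_sub_one_separable_iff.2 (Nat.cast_ne_zero.2 hk)
  have hss : Module.End.IsSemisimple (Matrix.toLin' M) := by
    apply Module.End.isSemisimple_of_squarefree_aeval_eq_zero hsep.squarefree
    have h1 : (Matrix.toLin' M : Module.End L (Fin 3 → L)) ^ k = 1 := by
      rw [← Matrix.toLin'_pow, hM, Matrix.toLin'_one]; rfl
    simp [h1]
  have htop := hss.iSup_eigenspace_eq_top
  rw [Submodule.iSup_eq_span] at htop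
  let b0 := Module.Basis.ofSpan htop.ge
  have hcard := Module.mk_finrank_eq_card_basis b0
  have e : Nonempty (Fin 3 ≃ _) := ⟨(Module.Basis.indexEquiv b0 (Pi.basisFun L (Fin 3))).symm⟩
  obtain ⟨e⟩ := e
  let b := b0.reindex e.symm
  have hb : ∀ i, ∃ μ : L, M.mulVec (b i) = μ • b i := by
    intro i
    have : b i ∈ ⋃ μ, ((Module.End.eigenspace (Matrix.toLin' M) μ : Submodule L (Fin 3 → L)) :
        Set (Fin 3 → L)) := by
      apply Module.Basis.ofSpan_subset htop.ge
      exact ⟨e i, by simp [b, b0]⟩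
    rw [Set.mem_iUnion] at this
    obtain ⟨μ, hμ⟩ := this
    refine ⟨μ, ?_⟩
    have := Module.End.mem_eigenspace_iff.1 hμ
    rwa [Matrix.toLin'_apply] at this
  choose a ha using hb
  refine ⟨Matrix.of fun i j => b j i, a, ?_, ?_⟩
  · have hu : IsUnit (Matrix.of fun i j => b j i) := by
      rw [← Matrix.linearIndependent_cols_iff_isUnit]
      exact b.linearIndependent
    exact ((Matrix.isUnit_iff_isUnit_det _).1 hu).ne_zero
  · ext i j
    have := congrFun (ha j) i
    rw [Matrix.mul_diagonal]
    simp only [Matrix.mul_apply, Matrix.of_apply]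
    simp only [Matrix.mulVec, dotProduct, Pi.smul_apply, smul_eq_mul] at this
    rw [this, mul_comm]

lemma perm_diag {M P : Matrix (Fin 3) (Fin 3) L} {a : Fin 3 → L} (hP : P.det ≠ 0)
    (h : M * P = P * Matrix.diagonal a) (σ : Equiv.Perm (Fin 3)) :
    ∃ P' : Matrix (Fin 3) (Fin 3) L, P'.det ≠ 0 ∧ M * P' = P' * Matrix.diagonal (a ∘ σ) := by
  refine ⟨P.submatrix id σ, ?_, ?_⟩
  · rw [Matrix.det_permute']
    apply mul_ne_zero _ hP
    rcases Int.units_eq_one_or (Equiv.Perm.sign σ) with h | h <;> simp [h]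
  · ext i j
    have := congrFun (congrFun h i) (σ j)
    rw [Matrix.mul_diagonal] at this ⊢
    exact this

variable {Ω : MvPolynomial (Fin 3) L} {d : ℕ}

lemma two_diag [IsAlgClosed L] (hom : Ω.IsHomogeneous d) (hd : 2 ≤ d) (hs : Sm Ω)
    {M P : Matrix (Fin 3) (Fin 3) L} {a : Fin 3 → L} (hP : P.det ≠ 0)
    (h : M * P = P * Matrix.diagonal a) (h01 : a 0 = a 1) :
    ∃ P' : Matrix (Fin 3) (Fin 3) L, P'.det ≠ 0 ∧ M * P' = P' * Matrix.diagonal a ∧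
      eval (Pi.single 0 1) (lsub P' Ω) ≠ 0 := by
  obtain ⟨s, t, hst⟩ := line_nonzero (lsub_isHomogeneous P hom) hd (Sm_lsub hs hP)
  have hst0 : s ≠ 0 ∨ t ≠ 0 := by
    by_contra hc
    push Not at hc
    obtain ⟨rfl, rfl⟩ := hc
    apply hst
    have : (![0, 0, 0] : Fin 3 → L) = (0 : L) • ![0, 0, 0] := by simp
    rw [this, eval_smul' (lsub_isHomogeneous P hom), zero_pow (by omega), zero_mul]
  obtain ⟨Q, hQ, hQc, hQv⟩ : ∃ Q : Matrix (Fin 3) (Fin 3) L, Q.det ≠ 0 ∧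
      Matrix.diagonal a * Q = Q * Matrix.diagonal a ∧
      Q.mulVec (Pi.single 0 1) = ![s, t, 0] := by
    rcases hst0 with h | h
    · refine ⟨!![s, 0, 0; t, 1, 0; 0, 0, 1], ?_, ?_, ?_⟩
      · simpa [Matrix.det_fin_three] using h
      · ext i j; rw [Matrix.mul_diagonal, Matrix.diagonal_mul]
        fin_cases i <;> fin_cases j <;> simp [h01, mul_comm]
      · ext i; fin_cases i <;> simp
    · refine ⟨!![s, 1, 0; t, 0, 0; 0, 0, 1], ?_, ?_, ?_⟩
      · simpa [Matrix.det_fin_three] using h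
      · ext i j; rw [Matrix.mul_diagonal, Matrix.diagonal_mul]
        fin_cases i <;> fin_cases j <;> simp [h01, mul_comm]
      · ext i; fin_cases i <;> simp
  refine ⟨P * Q, ?_, ?_, ?_⟩
  · rw [Matrix.det_mul]; exact mul_ne_zero hP hQ
  · rw [← mul_assoc, h, mul_assoc, hQc, mul_assoc]
  · rw [lsub_mul, eval_lsub, hQv]; exact hst

lemma normal_form [IsAlgClosed L] [CharZero L] (hom : Ω.IsHomogeneous d) (hd : 2 ≤ d) (hs : Sm Ω)
    {M : Matrix (Fin 3) (Fin 3) L} {k : ℕ} (hk : k ≠ 0) (hM : M ^ k = 1)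
    (hns : ∀ c : L, M ≠ c • 1) :
    ∃ (P : Matrix (Fin 3) (Fin 3) L) (a : Fin 3 → L), P.det ≠ 0 ∧
      M * P = P * Matrix.diagonal a ∧
      ((a 0 ≠ a 1 ∧ a 0 ≠ a 2 ∧ a 1 ≠ a 2) ∨
       (a 0 = a 1 ∧ a 0 ≠ a 2 ∧ eval (Pi.single 0 1) (lsub P Ω) ≠ 0)) := by
  obtain ⟨P, a, hP, h⟩ := exists_diag hk hM
  have hnot : ¬ (a 0 = a 1 ∧ a 0 = a 2) := by
    rintro ⟨h1, h2⟩
    apply hns (a 0)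
    have : Matrix.diagonal a = a 0 • (1 : Matrix (Fin 3) (Fin 3) L) := by
      ext i j
      rw [Matrix.smul_apply, Matrix.diagonal_apply, Matrix.one_apply]
      split_ifs with hij
      · fin_cases i <;> simp [h1, h2]
        rw [← h1, h2]
      · simp
    rw [this, mul_smul_comm, mul_one, ← one_mul P, ← mul_assoc, mul_one, ← smul_mul_assoc] at h
    have hu : IsUnit P := (Matrix.isUnit_iff_isUnit_det _).2 hP.isUnit
    exact hu.mul_right_cancel h
  have fin : ∀ σ : Equiv.Perm (Fin 3), a (σ 0) = a (σ 1) → a (σ 0) ≠ a (σ 2) → 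
    ∃ (P : Matrix (Fin 3) (Fin 3) L) (a : Fin 3 → L), P.det ≠ 0 ∧
      M * P = P * Matrix.diagonal a ∧
      ((a 0 ≠ a 1 ∧ a 0 ≠ a 2 ∧ a 1 ≠ a 2) ∨
       (a 0 = a 1 ∧ a 0 ≠ a 2 ∧ eval (Pi.single 0 1) (lsub P Ω) ≠ 0)) := by
    intro σ h1 h2
    obtain ⟨P', hP', h'⟩ := perm_diag hP h σ
    obtain ⟨P2, g1, g2, g3⟩ := two_diag hom hd hs hP' h' h1
    exact ⟨P2, a ∘ σ, g1, g2, Or.inr ⟨h1, h2, g3⟩⟩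
  by_cases h01 : a 0 = a 1
  · exact fin 1 h01 (fun h => hnot ⟨h01, h⟩)
  · by_cases h02 : a 0 = a 2
    · refine fin (Equiv.swap 1 2) ?_ ?_
      · simpa [Equiv.swap_apply_def] using h02
      · simpa [Equiv.swap_apply_def] using h01
    · by_cases h12 : a 1 = a 2
      · refine fin (Equiv.swap 0 2) ?_ ?_
        · simpa [Equiv.swap_apply_def] using h12.symm
        · simpa [Equiv.swap_apply_def] using fun h => h02 h.symm
      · exact ⟨P, a, hP, h, Or.inl ⟨h01, h02, h12⟩⟩

/-- fixed points of `M` on the curve -/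
def FixC (Ω : MvPolynomial (Fin 3) L) (M : Matrix (Fin 3) (Fin 3) L) :
    Set (Projectivization L (Fin 3 → L)) :=
  {p | eval p.rep Ω = 0 ∧ ∃ μ : L, M.mulVec p.rep = μ • p.rep}

lemma card_fix (hom : Ω.IsHomogeneous d) {M P : Matrix (Fin 3) (Fin 3) L} {a : Fin 3 → L}
    (hP : P.det ≠ 0) (h : M * P = P * Matrix.diagonal a) {ι : Type*} [Finite ι]
    (v : ι → Fin 3 → L) (hv : ∀ i, v i ≠ 0)
    (hfix : ∀ i, ∃ μ : L, (Matrix.diagonal a).mulVec (v i) = μ • v i)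
    (hz : ∀ i, eval (v i) (lsub P Ω) = 0)
    (hinj : ∀ i j (c : L), v i = c • v j → i = j)
    (hcompl : ∀ (w : Fin 3 → L) (μ : L), w ≠ 0 → eval w (lsub P Ω) = 0 →
      (Matrix.diagonal a).mulVec w = μ • w → ∃ i, ∃ c : L, w = c • v i) :
    (FixC Ω M).Finite ∧ Nat.card (FixC Ω M) = Nat.card ι := by
  have inj : ∀ w, P.mulVec w = 0 → w = 0 := fun w hw => Matrix.eq_zero_of_mulVec_eq_zero hP hw
  have inj2 : ∀ w w', P.mulVec w = P.mulVec w' → w = w' := fun w w' hw => by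
    rw [← sub_eq_zero]; apply inj; rw [Matrix.mulVec_sub, hw, sub_self]
  have hPv : ∀ i, P.mulVec (v i) ≠ 0 := fun i hi => hv i (inj _ hi)
  let f : ι → FixC Ω M := fun i => ⟨Projectivization.mk L (P.mulVec (v i)) (hPv i), by
    obtain ⟨c, hc⟩ := Projectivization.exists_smul_eq_mk_rep L (P.mulVec (v i)) (hPv i)
    obtain ⟨μ, hμ⟩ := hfix i
    have hc' : (c : L) • P.mulVec (v i) =
      (Projectivization.mk L (P.mulVec (v i)) (hPv i)).rep := hc
    refine ⟨?_, μ, ?_⟩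
    · rw [← hc', eval_smul' hom, ← eval_lsub, hz, mul_zero]
    · rw [← hc', Matrix.mulVec_smul, Matrix.mulVec_mulVec, h, ← Matrix.mulVec_mulVec, hμ,
        Matrix.mulVec_smul, smul_comm]⟩
  have hbij : Function.Bijective f := by
    constructor
    · intro i j hij
      have h1 := congrArg Subtype.val hij
      simp only [f] at h1
      rw [Projectivization.mk_eq_mk_iff'] at h1
      obtain ⟨c, hc⟩ := h1
      rw [← Matrix.mulVec_smul] at hc
      exact hinj i j c (inj2 _ _ hc).symm
    · rintro ⟨p, hp1, μ, hp2⟩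
      obtain ⟨w, hw⟩ : ∃ w, P.mulVec w = p.rep :=
        ⟨P⁻¹.mulVec p.rep, by rw [Matrix.mulVec_mulVec, Matrix.mul_nonsing_inv _ hP.isUnit,
          Matrix.one_mulVec]⟩
      have hw0 : w ≠ 0 := by
        rintro rfl
        rw [Matrix.mulVec_zero] at hw
        exact p.rep_nonzero hw.symm
      obtain ⟨i, c, hc⟩ := hcompl w μ hw0 (by rw [eval_lsub, hw]; exact hp1) (by
        apply inj2
        rw [Matrix.mulVec_mulVec, ← h, ← Matrix.mulVec_mulVec, hw, hp2, ← hw, Matrix.mulVec_smul])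
      refine ⟨i, Subtype.ext ?_⟩
      simp only [f]
      rw [← p.mk_rep, Projectivization.mk_eq_mk_iff']
      have hc0 : c ≠ 0 := by rintro rfl; rw [zero_smul] at hc; exact hw0 hc
      refine ⟨c⁻¹, ?_⟩
      rw [← hw, hc, Matrix.mulVec_smul, smul_smul, inv_mul_cancel₀ hc0, one_smul]
  have e := Equiv.ofBijective f hbij
  exact ⟨Finite.of_equiv _ e, (Nat.card_congr e).symm⟩
end
end PotAut


namespace PotAut
open MvPolynomial

section
variable {L : Type*} [Field L] {Ω : MvPolynomial (Fin 3) L} {d : ℕ}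

lemma eig_support {a : Fin 3 → L} {w : Fin 3 → L} {μ : L}
    (h : (Matrix.diagonal a).mulVec w = μ • w) {i : Fin 3} (hi : w i ≠ 0) :
    ∀ j, a j ≠ a i → w j = 0 := by
  intro j hj
  have h1 := congrFun h i
  have h2 := congrFun h j
  rw [Matrix.mulVec_diagonal, Pi.smul_apply, smul_eq_mul] at h1 h2
  have h3 := mul_right_cancel₀ hi h1
  by_contra hc
  have h4 := mul_right_cancel₀ hc h2
  exact hj (h4.trans h3.symm)

theorem lefschetz [IsAlgClosed L] [CharZero L] (hom : Ω.IsHomogeneous d) (hd : 3 ≤ d) (hs : Sm Ω)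
    {M : Matrix (Fin 3) (Fin 3) L} (hM0 : M.det ≠ 0) (hMp : Pres Ω M)
    {k : ℕ} (hk : k ≠ 0) (hM : M ^ k = 1) (hns : ∀ c : L, M ≠ c • 1) :
    (FixC Ω M).Finite ∧ LinearMap.trace L _ (lsubV (d - 3) M) +
      LinearMap.trace L _ (lsubV (d - 3) M⁻¹) = 2 - (Nat.card (FixC Ω M) : L) := by
  classical
  obtain ⟨P, a, hP, h, hcase⟩ := normal_form hom (by omega) hs hk hM hns
  have hdet : M.det = a 0 * a 1 * a 2 := by
    have := congrArg Matrix.det h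
    rw [Matrix.det_mul, Matrix.det_mul, mul_comm, Matrix.det_diagonal, Fin.prod_univ_three] at this
    exact mul_left_cancel₀ hP this
  have ha : ∀ i, a i ≠ 0 := by
    rw [hdet] at hM0
    intro i hi
    apply hM0
    match i with
    | 0 => rw [hi]; ring
    | 1 => rw [hi]; ring
    | 2 => rw [hi]; ring
  have hD : lsub (Matrix.diagonal a) (lsub P Ω) = C (a 0 * a 1 * a 2) * lsub P Ω := by
    rw [← lsub_mul, ← h, lsub_mul, hMp, map_mul, lsub_C, hdet]
  have hinv : M⁻¹ * P = P * Matrix.diagonal (fun i => (a i)⁻¹) := by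
    have e1 : Matrix.diagonal a * Matrix.diagonal (fun i => (a i)⁻¹) = 1 := by
      rw [Matrix.diagonal_mul_diagonal, ← Matrix.diagonal_one]
      congr 1; ext i; exact mul_inv_cancel₀ (ha i)
    calc M⁻¹ * P = M⁻¹ * (P * (Matrix.diagonal a * Matrix.diagonal (fun i => (a i)⁻¹))) := by
            rw [e1, mul_one]
      _ = M⁻¹ * (M * P) * Matrix.diagonal (fun i => (a i)⁻¹) := by
            rw [h, mul_assoc, mul_assoc]
      _ = _ := by rw [← mul_assoc, Matrix.nonsing_inv_mul _ hM0.isUnit, one_mul]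
  rw [trace_conj_diag _ _ hP h, trace_conj_diag _ _ hP hinv]
  have hom' := lsub_isHomogeneous P hom
  have hs' := Sm_lsub hs hP
  have hsm : ∀ (i : Fin 3), (Pi.single i 1 : Fin 3 → L) ≠ 0 := by
    intro i hi; have := congrFun hi i; simp at this
  rcases hcase with ⟨h01, h02, h12⟩ | ⟨h01, h02, h0⟩
  · rw [trace_distinct hom' hd hs' ha hD h01 h02 h12]
    have hainj : ∀ i j, i ≠ j → a j ≠ a i := by
      intro i j hij
      fin_cases i <;> fin_cases j <;> first | exact absurd rfl hij | assumption | (exact Ne.symm ‹_›)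
    obtain ⟨hf, hc⟩ := card_fix hom hP h (ι := {i : Fin 3 // eval (Pi.single i 1) (lsub P Ω) = 0})
      (fun i => Pi.single i.1 1) (fun i => hsm _) (fun i => ⟨_, diag_single i.1⟩) (fun i => i.2)
      (by
        rintro ⟨i, hi⟩ ⟨j, hj⟩ c hc
        by_contra hne
        have hij : i ≠ j := fun e => hne (Subtype.ext e)
        have := congrFun hc i
        simp [hij] at this)
      (by
        intro w μ hw hz hwμ
        obtain ⟨i, hi⟩ : ∃ i, w i ≠ 0 := by
          by_contra hcon; push Not at hcon; exact hw (funext hcon)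
        have hwi : w = w i • (Pi.single i 1 : Fin 3 → L) := by
          ext j
          by_cases hj : j = i
          · subst hj; simp
          · have := eig_support hwμ hi j (hainj i j (Ne.symm hj))
            simp [this, hj]
        refine ⟨⟨i, ?_⟩, w i, hwi⟩
        rw [hwi, eval_smul' hom'] at hz
        exact (mul_eq_zero.1 hz).resolve_left (pow_ne_zero _ hi))
    refine ⟨hf, ?_⟩
    rw [hc, Nat.card_eq_fintype_card, Fintype.card_subtype, ← Finset.sum_boole, Fin.sum_univ_three]
    rfl
  · rw [trace_two hom' hd hs' ha hD h01 h02 h0]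
    have hq := q0_card hom' hd hs' ha hD h01 h02 h0
    haveI : Finite {t : L // eval ![t, 1, 0] (lsub P Ω) = 0} := by
      apply Nat.finite_of_card_ne_zero; omega
    obtain ⟨hf, hc⟩ := card_fix hom hP h
      (ι := {t : L // eval ![t, 1, 0] (lsub P Ω) = 0} ⊕
        {u : Unit // eval (Pi.single 2 1) (lsub P Ω) = 0})
      (fun x => Sum.elim (fun t => ![t.1, 1, 0]) (fun _ => Pi.single 2 1) x)
      (by
        rintro (t | u)
        · intro hh; have := congrFun hh 1; simp at this
        · exact hsm 2)
      (by
        rintro (t | u)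
        · refine ⟨a 0, ?_⟩
          ext i; rw [Matrix.mulVec_diagonal]; fin_cases i <;> simp [h01]
        · exact ⟨_, diag_single 2⟩)
      (by
        rintro (t | u)
        · exact t.2
        · exact u.2)
      (by
        rintro (t | u) (t' | u') c hc
        · have e0 := congrFun hc 0
          have e1 := congrFun hc 1
          simp at e0 e1
          rw [← e1, one_mul] at e0
          rw [Subtype.ext e0]
        · have e1 := congrFun hc 1
          simp at e1
        · have e1 := congrFun hc 2
          simp at e1
        · rw [Subsingleton.elim u u'])
      (by
        intro w μ hw hz hwμ
        by_cases h2 : w 2 = 0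
        · by_cases h1 : w 1 = 0
          · exfalso
            have hwi : w = w 0 • (Pi.single 0 1 : Fin 3 → L) := by
              ext j; fin_cases j <;> simp [h1, h2]
            rw [hwi, eval_smul' hom'] at hz
            have := (mul_eq_zero.1 hz).resolve_right h0
            rw [eq_zero_of_pow_eq_zero this, zero_smul] at hwi
            exact hw hwi
          · have hwi : w = w 1 • ![w 0 / w 1, 1, 0] := by
              ext j; fin_cases j
              · simp; field_simp
              · simp
              · simp [h2]
            refine ⟨Sum.inl ⟨w 0 / w 1, ?_⟩, w 1, hwi⟩
            rw [hwi, eval_smul' hom'] at hz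
            exact (mul_eq_zero.1 hz).resolve_left (pow_ne_zero _ h1)
        · have z0 := eig_support hwμ h2 0 h02
          have z1 := eig_support hwμ h2 1 (h01 ▸ h02)
          have hwi : w = w 2 • (Pi.single 2 1 : Fin 3 → L) := by
            ext j; fin_cases j <;> simp [z0, z1]
          refine ⟨Sum.inr ⟨(), ?_⟩, w 2, hwi⟩
          rw [hwi, eval_smul' hom'] at hz
          exact (mul_eq_zero.1 hz).resolve_left (pow_ne_zero _ h2))
    refine ⟨hf, ?_⟩
    rw [hc, Nat.card_sum, hq]
    have : ((Nat.card {u : Unit // eval (Pi.single 2 1) (lsub P Ω) = 0} : ℕ) : L)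
        = on (lsub P Ω) 2 := by
      unfold on
      split_ifs with hh
      · simp [hh]
      · simp [hh]
    rw [Nat.cast_add, this]
end
end PotAut

namespace PotAut

lemma inv_bd {n k : ℕ} (hk : 0 < k) (h : k ≤ n) : (1 / n : ℚ) ≤ 1 / k := by
  have : (0 : ℚ) < k := by exact_mod_cast hk
  exact one_div_le_one_div_of_le this (by exact_mod_cast h)

lemma hur3_ord {a b c : ℕ} (ha : 2 ≤ a) (hab : a ≤ b) (hbc : b ≤ c)
    (h : (0 : ℚ) < 1 - 1 / a - 1 / b - 1 / c) : (1 / 42 : ℚ) ≤ 1 - 1 / a - 1 / b - 1 / c := by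
  have hc0 : (0 : ℚ) < 1 / c := by
    have : (0 : ℚ) < c := by exact_mod_cast (by omega : 0 < c)
    positivity
  rcases (by omega : a = 2 ∨ a = 3 ∨ 4 ≤ a) with h1 | h1 | h1
  · subst h1
    rcases (by omega : b = 2 ∨ b = 3 ∨ b = 4 ∨ 5 ≤ b) with h2 | h2 | h2 | h2
    · subst h2
      exfalso
      push_cast at h
      linarith
    · subst h2
      push_cast at h ⊢
      by_cases h3 : 7 ≤ c
      · have := inv_bd (by norm_num) h3
        push_cast at this
        linarith
      · exfalso
        have := inv_bd (n := 6) (k := c) (by omega) (by omega)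
        push_cast at this
        linarith
    · subst h2
      push_cast at h ⊢
      by_cases h3 : 5 ≤ c
      · have := inv_bd (by norm_num) h3
        push_cast at this
        linarith
      · exfalso
        have := inv_bd (n := 4) (k := c) (by omega) (by omega)
        push_cast at this
        linarith
    · have h3 := inv_bd (by norm_num) h2
      have h4 := inv_bd (by norm_num) (h2.trans hbc)
      push_cast at h3 h4 ⊢
      linarith
  · subst h1
    by_cases h2 : b = 3
    · subst h2
      push_cast at h ⊢
      by_cases h3 : 4 ≤ c
      · have := inv_bd (by norm_num) h3
        push_cast at this
        linarith
      · exfalso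
        have := inv_bd (n := 3) (k := c) (by omega) (by omega)
        push_cast at this
        linarith
    · have h2' : 4 ≤ b := by omega
      have h3 := inv_bd (by norm_num) h2'
      have h4 := inv_bd (by norm_num) (h2'.trans hbc)
      push_cast at h3 h4 ⊢
      linarith
  · have h3 := inv_bd (by norm_num) h1
    have h4 := inv_bd (by norm_num) (h1.trans hab)
    have h5 := inv_bd (by norm_num) ((h1.trans hab).trans hbc)
    push_cast at h3 h4 h5 ⊢
    linarith

lemma hur3 {a b c : ℕ} (ha : 2 ≤ a) (hb : 2 ≤ b) (hc : 2 ≤ c)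
    (h : (0 : ℚ) < 1 - 1 / a - 1 / b - 1 / c) : (1 / 42 : ℚ) ≤ 1 - 1 / a - 1 / b - 1 / c := by
  rcases le_total a b with h1 | h1 <;> rcases le_total b c with h2 | h2 <;>
    rcases le_total a c with h3 | h3
  · exact hur3_ord ha h1 h2 h
  · exact hur3_ord ha h1 h2 h
  · have := hur3_ord ha h3 h2 (by linarith); linarith
  · have := hur3_ord hc h3 h1 (by linarith); linarith
  · have := hur3_ord hb h1 h3 (by linarith); linarith
  · have := hur3_ord hb h2 h3 (by linarith); linarith
  · have := hur3_ord hc h2 h1 (by linarith); linarith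
  · have := hur3_ord hc h2 h1 (by linarith); linarith

lemma hur4 {a b c e : ℕ} (ha : 2 ≤ a) (hb : 2 ≤ b) (hc : 2 ≤ c) (he : 2 ≤ e)
    (h : (0 : ℚ) < 2 - 1 / a - 1 / b - 1 / c - 1 / e) :
    (1 / 42 : ℚ) ≤ 2 - 1 / a - 1 / b - 1 / c - 1 / e := by
  have h1 := inv_bd (by norm_num) ha
  have h2 := inv_bd (by norm_num) hb
  have h3 := inv_bd (by norm_num) hc
  have h4 := inv_bd (by norm_num) he
  push_cast at h1 h2 h3 h4
  rcases (by omega : 3 ≤ a ∨ 3 ≤ b ∨ 3 ≤ c ∨ 3 ≤ e ∨ (a = 2 ∧ b = 2 ∧ c = 2 ∧ e = 2))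
    with h5 | h5 | h5 | h5 | h5
  · have := inv_bd (by norm_num) h5
    push_cast at this
    linarith
  · have := inv_bd (by norm_num) h5
    push_cast at this
    linarith
  · have := inv_bd (by norm_num) h5
    push_cast at this
    linarith
  · have := inv_bd (by norm_num) h5
    push_cast at this
    linarith
  · obtain ⟨rfl, rfl, rfl, rfl⟩ := h5
    norm_num at h

lemma hurwitz {ι : Type*} [Fintype ι] (e : ι → ℕ) (he : ∀ i, 2 ≤ e i) (g : ℕ)
    (h : (0 : ℚ) < 2 * g - 2 + ∑ i, (1 - 1 / (e i : ℚ))) :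
    (1 / 42 : ℚ) ≤ 2 * g - 2 + ∑ i, (1 - 1 / (e i : ℚ)) := by
  have hhalf : ∀ i, (1 / 2 : ℚ) ≤ 1 - 1 / (e i : ℚ) := fun i => by
    have := inv_bd (by norm_num) (he i)
    push_cast at this
    linarith
  have hlt : ∀ i, 1 - 1 / (e i : ℚ) < 1 := fun i => by
    have : (0 : ℚ) < e i := by exact_mod_cast (lt_of_lt_of_le (by norm_num) (he i))
    have : (0 : ℚ) < 1 / e i := by positivity
    linarith
  have hsum : (Fintype.card ι : ℚ) * (1 / 2) ≤ ∑ i, (1 - 1 / (e i : ℚ)) := by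
    have := Finset.card_nsmul_le_sum Finset.univ (fun i => 1 - 1 / (e i : ℚ)) (1 / 2)
      (fun i _ => hhalf i)
    simpa [nsmul_eq_mul] using this
  have hsum' : ∑ i, (1 - 1 / (e i : ℚ)) ≤ (Fintype.card ι : ℚ) := by
    have := Finset.sum_le_card_nsmul Finset.univ (fun i => 1 - 1 / (e i : ℚ)) 1
      (fun i _ => (hlt i).le)
    simpa [nsmul_eq_mul] using this
  have hcard : ∀ n : ℕ, n ≤ Fintype.card ι → (n : ℚ) ≤ Fintype.card ι := fun n hn => by
    exact_mod_cast hn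
  rcases (by omega : g = 0 ∨ g = 1 ∨ 2 ≤ g) with hg | hg | hg
  · subst hg
    rcases (by omega : Fintype.card ι ≤ 2 ∨ Fintype.card ι = 3 ∨ Fintype.card ι = 4 ∨
      5 ≤ Fintype.card ι) with hr | hr | hr | hr
    · have : (Fintype.card ι : ℚ) ≤ 2 := by exact_mod_cast hr
      push_cast at h
      linarith
    · obtain ⟨σ⟩ : Nonempty (Fin 3 ≃ ι) := ⟨(Fintype.equivFinOfCardEq hr).symm⟩
      rw [← σ.sum_comp, Fin.sum_univ_three] at h ⊢
      have := hur3 (he (σ 0)) (he (σ 1)) (he (σ 2)) (by push_cast at h; linarith)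
      push_cast
      linarith
    · obtain ⟨σ⟩ : Nonempty (Fin 4 ≃ ι) := ⟨(Fintype.equivFinOfCardEq hr).symm⟩
      rw [← σ.sum_comp, Fin.sum_univ_four] at h ⊢
      have := hur4 (he (σ 0)) (he (σ 1)) (he (σ 2)) (he (σ 3)) (by push_cast at h; linarith)
      push_cast
      linarith
    · have := hcard 5 hr
      push_cast at this ⊢
      linarith
  · subst hg
    rcases Nat.eq_zero_or_pos (Fintype.card ι) with hr | hr
    · rw [hr] at hsum'
      push_cast at hsum' h
      linarith
    · have := hcard 1 hr
      push_cast at this ⊢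
      linarith
  · have : (2 : ℚ) ≤ g := by exact_mod_cast hg
    have h0 := hcard 0 (Nat.zero_le _)
    push_cast at h0
    linarith

open Classical in
/-- Abstract Hurwitz-type bound from character data. -/
lemma abstract_bound {L : Type*} [Field L] [CharZero L] {G X : Type*} [Group G] [Finite G]
    [MulAction G X] [Finite X] (S : Subgroup G) (hS : ∀ g ∈ S, ∀ p : X, g • p = p)
    (hX : ∀ p : X, ∃ g ∉ S, g • p = p) (t : G → L) (g' d : ℕ) (hd : 4 ≤ d)
    (ht : ∑ᶠ g, t g = Nat.card G * g')
    (htS : ∀ g ∈ S, t g + t g⁻¹ = (d - 1) * (d - 2))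
    (htn : ∀ g ∉ S, t g + t g⁻¹ = 2 - (Nat.card (MulAction.fixedBy X g) : L)) :
    Nat.card G ≤ 42 * (Nat.card S * (d * (d - 3))) := by
  have := Fintype.ofFinite G
  have := Fintype.ofFinite X
  rw [finsum_eq_sum_of_fintype] at ht
  let Q := Quotient (MulAction.orbitRel G X)
  have hB := MulAction.sum_card_fixedBy_eq_card_orbits_mul_card_group G X
  -- stabilisers
  have hst : ∀ p : X, ∃ e : ℕ, 2 ≤ e ∧
      Nat.card (MulAction.stabilizer G p) = Nat.card S * e := by
    intro p
    have hle : S ≤ MulAction.stabilizer G p := fun g hg => hS g hg p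
    obtain ⟨e, he⟩ := Subgroup.card_dvd_of_le hle
    refine ⟨e, ?_, he⟩
    by_contra h2
    have hpos : 0 < Nat.card (MulAction.stabilizer G p) := Nat.card_pos
    have he1 : e = 1 := by
      rcases (by omega : e = 0 ∨ e = 1) with h | h
      · subst h; omega
      · exact h
    subst he1
    have := Subgroup.eq_of_le_of_card_ge hle (by omega)
    obtain ⟨g, hg, hgp⟩ := hX p
    exact hg (this ▸ hgp)
  choose e he2 he using hst
  have hcX : Fintype.card X = ∑ ω : Q, Fintype.card (G ⧸ MulAction.stabilizer G ω.out) := by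
    rw [Fintype.card_congr (MulAction.selfEquivSigmaOrbitsQuotientStabilizer G X),
      Fintype.card_sigma]
  have hSpos : (0 : ℚ) < Nat.card S := by exact_mod_cast Nat.card_pos
  have hGpos : (0 : ℚ) < Nat.card G := by exact_mod_cast Nat.card_pos
  have hsX : (Nat.card S : ℚ) * Fintype.card X = Nat.card G * ∑ ω : Q, 1 / (e ω.out : ℚ) := by
    rw [hcX]
    push_cast
    rw [Finset.mul_sum, Finset.mul_sum]
    refine Finset.sum_congr rfl fun ω _ => ?_
    have h1 := Subgroup.card_eq_card_quotient_mul_card_subgroup (MulAction.stabilizer G ω.out)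
    rw [he, Nat.card_eq_fintype_card (α := G ⧸ _)] at h1
    have h2 : (0 : ℚ) < e ω.out := by exact_mod_cast (lt_of_lt_of_le (by norm_num) (he2 _))
    rw [h1]
    push_cast
    field_simp
  -- main identity
  have hsum : (2 : L) * (Nat.card G * g') = ∑ g, (t g + t g⁻¹) := by
    have hinv := Equiv.sum_comp (Equiv.inv G) t
    simp only [Equiv.inv_apply] at hinv
    rw [Finset.sum_add_distrib, hinv, ht]
    ring
  have hterm : ∀ g, t g + t g⁻¹ = (2 - (Fintype.card (MulAction.fixedBy X g) : L)) +
      (if g ∈ S then ((d : L) * (d - 3) + Fintype.card X) else 0) := by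
    intro g
    split_ifs with hg
    · rw [htS g hg]
      have : Fintype.card (MulAction.fixedBy X g) = Fintype.card X := by
        rw [← Fintype.card_congr (Equiv.Set.univ X)]
        refine Fintype.card_congr (Equiv.setCongr ?_)
        ext p
        simp [hS g hg p]
      rw [this]
      ring
    · rw [htn g hg, Nat.card_eq_fintype_card]
      ring
  have hid : (2 : L) * (Nat.card G * g') = 2 * Nat.card G - Fintype.card Q * Nat.card G +
      Nat.card S * (d * (d - 3) + Fintype.card X) := by
    rw [hsum, Finset.sum_congr rfl fun g _ => hterm g, Finset.sum_add_distrib,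
      Finset.sum_sub_distrib, ← Nat.cast_sum, hB, ← Finset.sum_filter, Finset.sum_const,
      Finset.sum_const, Nat.card_eq_fintype_card, Finset.card_univ]
    have : (Finset.univ.filter (fun g => g ∈ S)).card = Nat.card S := by
      rw [Nat.card_eq_fintype_card]
      exact (Fintype.card_subtype _).symm
    rw [this]
    simp only [nsmul_eq_mul]
    push_cast
    ring
  have hid' : (2 : ℚ) * (Nat.card G * g') = 2 * Nat.card G - Fintype.card Q * Nat.card G +
      Nat.card S * (d * (d - 3) + Fintype.card X) := by
    have : ((2 : ℤ) * (Nat.card G * g')) = 2 * Nat.card G - Fintype.card Q * Nat.card G +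
      Nat.card S * (d * (d - 3) + Fintype.card X) := by
      exact_mod_cast hid
    exact_mod_cast this
  have hd3 : (0 : ℚ) < d * (d - 3) := by
    have : (4 : ℚ) ≤ d := by exact_mod_cast hd
    have h2 : (0 : ℚ) < d - 3 := by linarith
    have h3 : (0 : ℚ) < d := by linarith
    positivity
  have hH : (Nat.card G : ℚ) * (2 * g' - 2 + ∑ ω : Q, (1 - 1 / (e ω.out : ℚ))) =
      Nat.card S * (d * (d - 3)) := by
    rw [Finset.sum_sub_distrib, mul_add, mul_sub, mul_sub, ← hsX]
    simp only [Finset.sum_const, Finset.card_univ, nsmul_eq_mul, mul_one]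
    linear_combination hid'
  have hpos : (0 : ℚ) < 2 * g' - 2 + ∑ ω : Q, (1 - 1 / (e ω.out : ℚ)) := by
    by_contra hneg
    have h1 : (Nat.card G : ℚ) * (2 * g' - 2 + ∑ ω : Q, (1 - 1 / (e ω.out : ℚ))) ≤ 0 :=
      mul_nonpos_of_nonneg_of_nonpos hGpos.le (not_lt.mp hneg)
    have h2 : (0 : ℚ) < Nat.card S * (d * (d - 3)) := mul_pos hSpos hd3
    linarith
  have h42 := hurwitz (fun ω : Q => e ω.out) (fun ω => he2 _) g' hpos
  have hfin : (Nat.card G : ℚ) ≤ 42 * (Nat.card S * (d * (d - 3))) := by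
    rw [← hH]
    nlinarith
  have hcast : ((d - 3 : ℕ) : ℚ) = d - 3 := by
    rw [Nat.cast_sub (by omega)]; norm_num
  rw [← hcast] at hfin
  exact_mod_cast hfin

end PotAut

namespace PotAut
open MvPolynomial

section
variable {L : Type*} [Field L]

/-- the group of matrices preserving the potential up to the determinant -/
def PG (Ω : MvPolynomial (Fin 3) L) : Subgroup (Matrix (Fin 3) (Fin 3) L)ˣ where
  carrier := {g | Pres Ω (g : Matrix (Fin 3) (Fin 3) L)}
  mul_mem' := fun {a b} ha hb => Pres.mul ha hb
  one_mem' := Pres.one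
  inv_mem' := fun {a} ha => Pres.inv' ha (a.mul_inv)

lemma PG_finite [CharZero L] [IsAlgClosed L] {Ω : MvPolynomial (Fin 3) L} {d : ℕ}
    (hom : Ω.IsHomogeneous d) (hd : 4 ≤ d) (hs : Sm Ω) : Finite (PG Ω) := by
  have := (pres_finite hom hd hs).to_subtype
  refine Finite.of_injective (fun g : PG Ω =>
    (⟨(g.1 : Matrix (Fin 3) (Fin 3) L), ?_, g.2⟩ :
      {M : Matrix (Fin 3) (Fin 3) L | M.det ≠ 0 ∧ Pres Ω M})) ?_
  · exact ((Matrix.isUnit_iff_isUnit_det _).mp g.1.isUnit).ne_zero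
  · intro a b hab
    have := congrArg Subtype.val hab
    exact Subtype.ext (Units.ext this)

lemma smul_fix_iff (g : (Matrix (Fin 3) (Fin 3) L)ˣ) (p : Projectivization L (Fin 3 → L)) :
    g • p = p ↔ ∃ μ : L, (g : Matrix (Fin 3) (Fin 3) L).mulVec p.rep = μ • p.rep := by
  conv_lhs => rw [← p.mk_rep]
  rw [Projectivization.smul_mk, Projectivization.mk_eq_mk_iff']
  constructor
  · rintro ⟨a, ha⟩
    exact ⟨a, ha.symm⟩
  · rintro ⟨a, ha⟩
    exact ⟨a, ha.symm⟩

lemma rep_smul (g : (Matrix (Fin 3) (Fin 3) L)ˣ) (p : Projectivization L (Fin 3 → L)) :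
    ∃ a : L, (g • p).rep = a • (g : Matrix (Fin 3) (Fin 3) L).mulVec p.rep := by
  obtain ⟨a, ha⟩ := Projectivization.exists_smul_eq_mk_rep L (g • p.rep)
    (by rw [smul_ne_zero_iff_ne]; exact p.rep_nonzero)
  refine ⟨(a : Lˣ), ?_⟩
  have h : g • p = Projectivization.mk L (g • p.rep)
      (by rw [smul_ne_zero_iff_ne]; exact p.rep_nonzero) := by
    conv_lhs => rw [← p.mk_rep]
    rw [Projectivization.smul_mk]
  rw [h, ← ha]
  rfl

lemma curve_smul {Ω : MvPolynomial (Fin 3) L} {d : ℕ} (hom : Ω.IsHomogeneous d)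
    {g : (Matrix (Fin 3) (Fin 3) L)ˣ} (hg : g ∈ PG Ω) {p : Projectivization L (Fin 3 → L)}
    (hp : eval p.rep Ω = 0) : eval (g • p).rep Ω = 0 := by
  obtain ⟨a, ha⟩ := rep_smul g p
  rw [ha, eval_smul' hom, ← eval_lsub, show lsub _ Ω = _ from hg, map_mul, hp]
  simp

/-- scalar elements -/
def PS (Ω : MvPolynomial (Fin 3) L) : Subgroup (PG Ω) where
  carrier := {g | ∃ c : L, (g.1 : Matrix (Fin 3) (Fin 3) L) = c • 1}
  mul_mem' := by
    rintro a b ⟨c, hc⟩ ⟨e, he⟩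
    refine ⟨c * e, ?_⟩
    rw [Subgroup.coe_mul, Units.val_mul, hc, he]
    simp [smul_smul, mul_comm]
  one_mem' := ⟨1, by simp⟩
  inv_mem' := by
    rintro a ⟨c, hc⟩
    refine ⟨c⁻¹, ?_⟩
    have hc0 : c ≠ 0 := by
      rintro rfl
      have := (Matrix.isUnit_iff_isUnit_det _).mp a.1.isUnit
      rw [hc] at this
      simp at this
    rw [Subgroup.coe_inv]
    have h : (a.1 : Matrix (Fin 3) (Fin 3) L) * (c⁻¹ • 1) = 1 := by
      rw [hc]
      simp [smul_smul, hc0]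
    exact (Units.inv_eq_of_mul_eq_one_right (u := a.1) h)

lemma mem_PS {Ω : MvPolynomial (Fin 3) L} (g : PG Ω) :
    g ∈ PS Ω ↔ ∃ c : L, (g.1 : Matrix (Fin 3) (Fin 3) L) = c • 1 := Iff.rfl

lemma ne_zero_of_Sm {Ω : MvPolynomial (Fin 3) L} (hs : Sm Ω) : Ω ≠ 0 := by
  rintro rfl
  have := congrFun (hs (fun _ => 1) (by simp)) 0
  simp at this

lemma lsub_scalar {Ω : MvPolynomial (Fin 3) L} {d : ℕ} (hom : Ω.IsHomogeneous d) (c : L) :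
    lsub (c • (1 : Matrix (Fin 3) (Fin 3) L)) Ω = C (c ^ d) * Ω := by
  have h1 : (c • (1 : Matrix (Fin 3) (Fin 3) L)) = Matrix.diagonal (fun _ => c) := by
    rw [Matrix.smul_one_eq_diagonal]
  rw [h1]
  ext m
  rw [lsub_diag_coeff, coeff_C_mul]
  by_cases hm : coeff m Ω = 0
  · simp [hm]
  · have := hom_support hom (mem_support_iff.mpr hm)
    rw [Fin.prod_univ_three, ← pow_add, ← pow_add, this]

lemma scalar_pow {Ω : MvPolynomial (Fin 3) L} {d : ℕ} (hom : Ω.IsHomogeneous d) (hd : 3 ≤ d)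
    (hs : Sm Ω) {g : PG Ω} {c : L} (hc : (g.1 : Matrix (Fin 3) (Fin 3) L) = c • 1) :
    c ≠ 0 ∧ c ^ (d - 3) = 1 := by
  have hdet : (g.1 : Matrix (Fin 3) (Fin 3) L).det = c ^ 3 := by
    rw [hc, Matrix.det_smul]; simp
  have hc0 : c ≠ 0 := by
    rintro rfl
    have := (Matrix.isUnit_iff_isUnit_det _).mp g.1.isUnit
    rw [hdet] at this
    simp at this
  have h := g.2
  change lsub _ Ω = _ at h
  rw [hdet, hc, lsub_scalar hom] at h
  have h2 := mul_right_cancel₀ (ne_zero_of_Sm hs) h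
  have h3 := C_injective _ _ h2
  refine ⟨hc0, ?_⟩
  have : c ^ (d - 3) * c ^ 3 = 1 * c ^ 3 := by
    rw [← pow_add, Nat.sub_add_cancel hd, h3, one_mul]
  exact mul_right_cancel₀ (pow_ne_zero 3 hc0) this

lemma PS_card {Ω : MvPolynomial (Fin 3) L} {d : ℕ} (hom : Ω.IsHomogeneous d) (hd : 4 ≤ d)
    (hs : Sm Ω) : Nat.card (PS Ω) ≤ d - 3 := by
  haveI : NeZero (d - 3) := ⟨by omega⟩
  refine le_trans ?_ (card_rootsOfUnity L (d - 3))
  choose c hc using fun g : PS Ω => (mem_PS g.1).mp g.2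
  refine Nat.card_le_card_of_injective (fun g : PS Ω =>
    rootsOfUnity.mkOfPowEq (c g) (scalar_pow hom (by omega) hs (hc g)).2) ?_
  intro a b hab
  have h1 : c a = c b := by
    have := congrArg (fun u : rootsOfUnity (d - 3) L => ((u : Lˣ) : L)) hab
    simpa using this
  refine Subtype.ext (Subtype.ext (Units.ext ?_))
  rw [hc a, hc b, h1]

lemma trace_scalar {Ω : MvPolynomial (Fin 3) L} {d : ℕ} (hom : Ω.IsHomogeneous d) (hd : 3 ≤ d)
    (hs : Sm Ω) {g : PG Ω} (hg : g ∈ PS Ω) :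
    2 * LinearMap.trace L _ (lsubV (d - 3) (g.1 : Matrix (Fin 3) (Fin 3) L)) =
      ((d : L) - 1) * (d - 2) := by
  obtain ⟨c, hc⟩ := hg
  have h1 := (scalar_pow hom hd hs hc).2
  rw [hc, Matrix.smul_one_eq_diagonal, trace_diag, h3_same3, h1, Nat.cast_sub hd]
  push_cast
  ring

/-- special points of the curve -/
def PX (Ω : MvPolynomial (Fin 3) L) {d : ℕ} (hom : Ω.IsHomogeneous d) :
    SubMulAction (PG Ω) (Projectivization L (Fin 3 → L)) where
  carrier := {p | eval p.rep Ω = 0 ∧ ∃ g : PG Ω, g ∉ PS Ω ∧ g • p = p}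
  smul_mem' := by
    rintro h p ⟨h1, g, hg, hgp⟩
    refine ⟨curve_smul hom h.2 h1, h * g * h⁻¹, ?_, ?_⟩
    · rintro ⟨c, hc⟩
      refine hg ⟨c, ?_⟩
      have h3 : (g.1 : Matrix (Fin 3) (Fin 3) L) = (h⁻¹.1 : (Matrix (Fin 3) (Fin 3) L)ˣ) *
          ((h * g * h⁻¹).1 : (Matrix (Fin 3) (Fin 3) L)ˣ) * (h.1 : (Matrix (Fin 3) (Fin 3) L)ˣ) := by
        rw [← Units.val_mul, ← Units.val_mul, ← Subgroup.coe_mul, ← Subgroup.coe_mul]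
        rw [show h⁻¹ * (h * g * h⁻¹) * h = g by group]
      rw [h3, hc]
      simp
    · rw [mul_smul, mul_smul, inv_smul_smul, hgp]

theorem PG_card [CharZero L] [IsAlgClosed L] {Ω : MvPolynomial (Fin 3) L} {d : ℕ}
    (hom : Ω.IsHomogeneous d) (hd : 4 ≤ d) (hs : Sm Ω) :
    Nat.card (PG Ω) ≤ 42 * d * (d - 3) ^ 2 := by
  haveI := PG_finite hom hd hs
  have hdet : ∀ g : PG Ω, (g.1 : Matrix (Fin 3) (Fin 3) L).det ≠ 0 := fun g =>
    ((Matrix.isUnit_iff_isUnit_det _).mp g.1.isUnit).ne_zero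
  have hlef : ∀ g : PG Ω, g ∉ PS Ω → (FixC Ω (g.1 : Matrix (Fin 3) (Fin 3) L)).Finite ∧
      LinearMap.trace L _ (lsubV (d - 3) (g.1 : Matrix (Fin 3) (Fin 3) L)) +
      LinearMap.trace L _ (lsubV (d - 3) (g.1 : Matrix (Fin 3) (Fin 3) L)⁻¹) =
      2 - (Nat.card (FixC Ω (g.1 : Matrix (Fin 3) (Fin 3) L)) : L) := by
    intro g hg
    refine lefschetz hom (by omega) hs (hdet g) g.2 (k := Nat.card (PG Ω)) Nat.card_pos.ne' ?_ ?_
    · rw [← Units.val_pow_eq_pow_val, ← Subgroup.coe_pow, pow_card_eq_one']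
      rfl
    · intro c hc
      exact hg ⟨c, hc⟩
  have hfix : ∀ (g : PG Ω) (p : Projectivization L (Fin 3 → L)), g • p = p ↔
      ∃ μ : L, (g.1 : Matrix (Fin 3) (Fin 3) L).mulVec p.rep = μ • p.rep :=
    fun g p => smul_fix_iff g.1 p
  haveI hXfin : Finite (PX Ω hom) := by
    have : (⋃ g : {g : PG Ω // g ∉ PS Ω},
        FixC Ω (g.1.1 : Matrix (Fin 3) (Fin 3) L)).Finite :=
      Set.finite_iUnion fun g => (hlef g.1 g.2).1
    refine (this.subset ?_ : ((PX Ω hom : Set (Projectivization L (Fin 3 → L)))).Finite)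
    rintro p ⟨h1, g, hg, hgp⟩
    exact Set.mem_iUnion.mpr ⟨⟨g, hg⟩, h1, (hfix g p).mp hgp⟩
  let ρ : Representation L (PG Ω) (homogeneousSubmodule (Fin 3) L (d - 3)) :=
    { toFun := fun g => lsubV (d - 3) ((g⁻¹).1 : (Matrix (Fin 3) (Fin 3) L)ˣ)
      map_one' := by
        rw [inv_one]
        exact lsubV_one _
      map_mul' := fun a b => by
        rw [mul_inv_rev, Subgroup.coe_mul, Units.val_mul, lsubV_mul] }
  have hb := abstract_bound (L := L) (X := PX Ω hom) (PS Ω) ?_ ?_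
    (fun g => ρ.character g) (Module.finrank L ρ.invariants) d hd ?_ ?_ ?_
  · refine hb.trans ?_
    have := PS_card hom hd hs
    calc 42 * (Nat.card (PS Ω) * (d * (d - 3))) ≤ 42 * ((d - 3) * (d * (d - 3))) := by gcongr
      _ = _ := by ring
  · rintro g ⟨c, hc⟩ p
    refine Subtype.ext ?_
    rw [SubMulAction.val_smul]
    refine (hfix g p).mpr ⟨c, ?_⟩
    rw [hc, Matrix.smul_mulVec, Matrix.one_mulVec]
  · rintro ⟨p, h1, g, hg, hgp⟩
    exact ⟨g, hg, Subtype.ext hgp⟩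
  · haveI := Fintype.ofFinite (PG Ω)
    have h0 : (Nat.card (PG Ω) : L) ≠ 0 := by
      exact_mod_cast Nat.card_pos.ne'
    haveI := invertibleOfNonzero h0
    rw [finsum_eq_sum_of_fintype, ← Representation.card_inv_mul_sum_char_eq_finrank ρ]
    field_simp
  · intro g hg
    have h1 := trace_scalar hom (by omega) hs hg
    have h2 := trace_scalar hom (by omega) hs (inv_mem hg)
    have h3 : (2 : L) ≠ 0 := two_ne_zero
    refine mul_left_cancel₀ h3 ?_
    change 2 * (LinearMap.trace L _ (lsubV (d - 3) ((g⁻¹).1 : (Matrix (Fin 3) (Fin 3) L)ˣ)) +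
      LinearMap.trace L _ (lsubV (d - 3) ((g⁻¹⁻¹).1 : (Matrix (Fin 3) (Fin 3) L)ˣ))) = _
    rw [inv_inv]
    linear_combination h1 + h2
  · intro g hg
    have h1 := (hlef g hg).2
    change (LinearMap.trace L _ (lsubV (d - 3) ((g⁻¹).1 : (Matrix (Fin 3) (Fin 3) L)ˣ)) +
      LinearMap.trace L _ (lsubV (d - 3) ((g⁻¹⁻¹).1 : (Matrix (Fin 3) (Fin 3) L)ˣ))) = _
    rw [inv_inv, Subgroup.coe_inv, Matrix.coe_units_inv, add_comm, h1]
    have : Nat.card (FixC Ω (g.1 : Matrix (Fin 3) (Fin 3) L)) =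
        Nat.card (MulAction.fixedBy (PX Ω hom) g) := by
      refine Nat.card_congr
        { toFun := fun p => ⟨⟨p.1, p.2.1, g, hg, (hfix g p.1).mpr p.2.2⟩,
            Subtype.ext ((hfix g p.1).mpr p.2.2)⟩
          invFun := fun q => ⟨q.1.1, q.1.2.1,
            (hfix g q.1.1).mp (congrArg Subtype.val q.2)⟩
          left_inv := fun p => rfl
          right_inv := fun q => rfl }
    rw [this]

end
end PotAut

namespace PotAut
open MvPolynomial

/-- algebraic isolated singularity condition -/
def IsoS {R : Type*} [CommRing R] (Ω : MvPolynomial (Fin 3) R) : Prop :=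
  ∃ N : ℕ, ∀ i, (X i : MvPolynomial (Fin 3) R) ^ N ∈ Ideal.span (Set.range fun j => pderiv j Ω)

attribute [local instance] MvPolynomial.gradedAlgebra in
lemma IsoS.of_fd {k : Type*} [Field k] {Ω : MvPolynomial (Fin 3) k} {d : ℕ}
    (hom : Ω.IsHomogeneous d)
    (h : FiniteDimensional k (MvPolynomial (Fin 3) k ⧸
      Ideal.span {pderiv (0 : Fin 3) Ω, pderiv 1 Ω, pderiv 2 Ω})) : IsoS Ω := by
  have hJ : Ideal.span {pderiv (0 : Fin 3) Ω, pderiv 1 Ω, pderiv 2 Ω} =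
      Ideal.span (Set.range fun j => pderiv j Ω) := by
    refine congrArg Ideal.span (Set.ext fun x => ?_)
    simp only [Set.mem_insert_iff, Set.mem_singleton_iff, Set.mem_range, Fin.exists_fin_succ]
    simp [eq_comm]
  rw [hJ] at h
  set J := Ideal.span (Set.range fun j => pderiv j Ω) with hJdef
  have hJh : J.IsHomogeneous (homogeneousSubmodule (Fin 3) k) := by
    refine Ideal.homogeneous_span _ _ ?_
    rintro x ⟨j, rfl⟩
    exact ⟨d - 1, hom.pderiv⟩
  have key : ∀ i, ∃ n : ℕ, (X i : MvPolynomial (Fin 3) k) ^ n ∈ J := by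
    intro i
    have hIntg : IsIntegral k (Ideal.Quotient.mk J (X i)) := Algebra.IsIntegral.isIntegral _
    obtain ⟨p, hp, hp0⟩ := hIntg
    refine ⟨p.natDegree, ?_⟩
    have h1 : Polynomial.aeval (X i : MvPolynomial (Fin 3) k) p ∈ J := by
      rw [← Ideal.Quotient.eq_zero_iff_mem, ← hp0]
      change Ideal.Quotient.mkₐ k J _ = _
      rw [← Polynomial.aeval_algHom_apply]
      rfl
    have h2 := homogeneousComponent_mem_of_mem hJh h1 p.natDegree
    have h3 : homogeneousComponent p.natDegree (Polynomial.aeval (X i : MvPolynomial (Fin 3) k) p)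
        = X i ^ p.natDegree := by
      rw [Polynomial.aeval_eq_sum_range, map_sum, Finset.sum_eq_single p.natDegree]
      · rw [hp.coeff_natDegree, one_smul]
        exact homogeneousComponent_eq_self (by simpa using (isHomogeneous_X k i).pow p.natDegree)
      · intro b _ hb
        rw [map_smul, homogeneousComponent_of_mem
          (show X i ^ b ∈ homogeneousSubmodule (Fin 3) k b by
            simpa using (isHomogeneous_X k i).pow b), if_neg hb.symm, smul_zero]
      · intro hb
        simp at hb
    rwa [h3] at h2
  choose n hn using key
  refine ⟨∑ i, n i, fun i => ?_⟩
  exact Ideal.pow_mem_of_pow_mem _ (hn i) (Finset.single_le_sum (fun _ _ => Nat.zero_le _)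
    (Finset.mem_univ i))

lemma IsoS.map {R S : Type*} [CommRing R] [CommRing S] (φ : R →+* S)
    {Ω : MvPolynomial (Fin 3) R} (h : IsoS Ω) : IsoS (map φ Ω) := by
  obtain ⟨N, hN⟩ := h
  refine ⟨N, fun i => ?_⟩
  have := Ideal.mem_map_of_mem (MvPolynomial.map φ) (hN i)
  rw [Ideal.map_span, ← Set.range_comp, map_pow, map_X] at this
  convert this using 3
  ext j : 1
  exact pderiv_map

lemma IsoS.exists_coeff {R : Type*} [CommRing R] {Ω : MvPolynomial (Fin 3) R} (h : IsoS Ω) :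
    ∃ N : ℕ, ∀ i, ∃ a : Fin 3 → MvPolynomial (Fin 3) R,
      (X i : MvPolynomial (Fin 3) R) ^ N = ∑ j, a j * pderiv j Ω := by
  obtain ⟨N, hN⟩ := h
  refine ⟨N, fun i => ?_⟩
  obtain ⟨a, ha⟩ := Ideal.mem_span_range_iff_exists_fun.mp (hN i)
  exact ⟨a, ha.symm⟩

lemma IsoS.Sm {L : Type*} [Field L] {Ω : MvPolynomial (Fin 3) L} (h : IsoS Ω) : Sm Ω := by
  intro v hv
  obtain ⟨N, hN⟩ := h.exists_coeff
  ext i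
  obtain ⟨a, ha⟩ := hN i
  have := congrArg (eval v) ha
  rw [map_pow, eval_X, map_sum] at this
  have h0 : v i ^ N = 0 := by
    rw [this]
    exact Finset.sum_eq_zero fun j _ => by rw [map_mul, hv j, mul_zero]
  exact eq_zero_of_pow_eq_zero h0

lemma IsoS.isRadical {L : Type*} [Field L] {Ω : MvPolynomial (Fin 3) L} (h : IsoS Ω) :
    IsRadical Ω := by
  refine Squarefree.isRadical ?_
  rintro x ⟨c, hc⟩
  obtain ⟨N, hN⟩ := h.exists_coeff
  have hx : ∀ j, x ∣ pderiv j Ω := by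
    intro j
    rw [hc, Derivation.leibniz, Derivation.leibniz]
    simp only [smul_eq_mul]
    exact ⟨x * pderiv j c + c * pderiv j x + c * pderiv j x, by ring⟩
  have hX : ∀ i, x ∣ X i ^ N := by
    intro i
    obtain ⟨a, ha⟩ := hN i
    rw [ha]
    exact Finset.dvd_sum fun j _ => (hx j).mul_left _
  have hrel : IsRelPrime (X 0 ^ N : MvPolynomial (Fin 3) L) (X 1 ^ N) := by
    refine IsRelPrime.pow ?_
    refine ((X_prime (R := L) (i := (0 : Fin 3))).irreducible.isRelPrime_iff_not_dvd).mpr ?_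
    rw [X_dvd_X]
    decide
  exact hrel (hX 0) (hX 1)

end PotAut

namespace PotAut
open MvPolynomial

section
variable {R : Type*} [CommRing R]

lemma coeff_zero_of_deg {p : MvPolynomial (Fin 3) R} {a : ℕ} (hp : p.totalDegree ≤ a)
    {m : Fin 3 →₀ ℕ} (hm : a < m.degree) : coeff m p = 0 := by
  by_contra h
  have := le_totalDegree (mem_support_iff.mpr h)
  have h2 : m.degree = m.sum fun _ e => e := rfl
  omega

lemma comp_mul {p q : MvPolynomial (Fin 3) R} {a b : ℕ} (hp : p.totalDegree ≤ a)
    (hq : q.totalDegree ≤ b) : homogeneousComponent (a + b) (p * q) =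
      homogeneousComponent a p * homogeneousComponent b q := by
  ext m
  rw [coeff_homogeneousComponent]
  split_ifs with hm
  · rw [coeff_mul, coeff_mul]
    refine Finset.sum_congr rfl fun x hx => ?_
    rw [Finset.HasAntidiagonal.mem_antidiagonal] at hx
    rw [← hx, map_add] at hm
    rw [coeff_homogeneousComponent, coeff_homogeneousComponent]
    rcases lt_trichotomy x.1.degree a with h | h | h
    · rw [coeff_zero_of_deg hq (by omega), if_neg h.ne]
      simp
    · rw [if_pos h, if_pos (by omega)]
    · rw [coeff_zero_of_deg hp h]
      simp
  · have := (homogeneousComponent_isHomogeneous a p).mul (homogeneousComponent_isHomogeneous b q)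
    exact (this.coeff_eq_zero hm).symm

lemma comp_pow {p : MvPolynomial (Fin 3) R} {a : ℕ} (hp : p.totalDegree ≤ a) (n : ℕ) :
    (p ^ n).totalDegree ≤ n * a ∧
    homogeneousComponent (n * a) (p ^ n) = homogeneousComponent a p ^ n := by
  refine ⟨(totalDegree_pow _ _).trans (Nat.mul_le_mul_left _ hp), ?_⟩
  induction n with
  | zero =>
    rw [pow_zero, pow_zero, zero_mul]
    exact homogeneousComponent_eq_self (isHomogeneous_one _ _)
  | succ n ih =>
    rw [pow_succ, Nat.succ_mul, comp_mul ((totalDegree_pow _ _).trans (Nat.mul_le_mul_left _ hp)) hp,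
      ih, pow_succ]

lemma aeval_sum (f : Fin 3 → MvPolynomial (Fin 3) R) (g : MvPolynomial (Fin 3) R) :
    aeval f g = ∑ m ∈ g.support, C (coeff m g) * (f 0 ^ m 0 * f 1 ^ m 1 * f 2 ^ m 2) := by
  rw [aeval_def, eval₂_eq']
  refine Finset.sum_congr rfl fun m _ => ?_
  rw [Fin.prod_univ_three]
  rfl

lemma mono_deg {f : Fin 3 → MvPolynomial (Fin 3) R} {D : ℕ} (hf : ∀ i, (f i).totalDegree ≤ D)
    (c : R) (m : Fin 3 →₀ ℕ) {n : ℕ} (hm : m 0 + m 1 + m 2 = n) :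
    (C c * (f 0 ^ m 0 * f 1 ^ m 1 * f 2 ^ m 2)).totalDegree ≤ n * D ∧
    homogeneousComponent (n * D) (C c * (f 0 ^ m 0 * f 1 ^ m 1 * f 2 ^ m 2)) =
      C c * (homogeneousComponent D (f 0) ^ m 0 * homogeneousComponent D (f 1) ^ m 1 *
        homogeneousComponent D (f 2) ^ m 2) := by
  have h0 := comp_pow (hf 0) (m 0)
  have h1 := comp_pow (hf 1) (m 1)
  have h2 := comp_pow (hf 2) (m 2)
  have h01 : (f 0 ^ m 0 * f 1 ^ m 1).totalDegree ≤ m 0 * D + m 1 * D :=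
    (totalDegree_mul _ _).trans (add_le_add h0.1 h1.1)
  have h012 : (f 0 ^ m 0 * f 1 ^ m 1 * f 2 ^ m 2).totalDegree ≤ m 0 * D + m 1 * D + m 2 * D :=
    (totalDegree_mul _ _).trans (add_le_add h01 h2.1)
  have hn : n * D = m 0 * D + m 1 * D + m 2 * D := by rw [← hm]; ring
  refine ⟨?_, ?_⟩
  · refine (totalDegree_mul _ _).trans ?_
    rw [totalDegree_C, zero_add, hn]
    exact h012
  · rw [homogeneousComponent_C_mul, hn, comp_mul h01 h2.1, comp_mul h0.1 h1.1, h0.2, h1.2, h2.2]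

lemma hom_support' {f : MvPolynomial (Fin 3) R} {n : ℕ} (hf : f.IsHomogeneous n)
    {m : Fin 3 →₀ ℕ} (hm : m ∈ f.support) : m 0 + m 1 + m 2 = n := by
  rw [← degree3]
  by_contra h
  exact (mem_support_iff.1 hm) (hf.coeff_eq_zero h)

lemma aeval_comp {f : Fin 3 → MvPolynomial (Fin 3) R} {D : ℕ} (hf : ∀ i, (f i).totalDegree ≤ D)
    {g : MvPolynomial (Fin 3) R} {n : ℕ} (hg : g.IsHomogeneous n) :
    (aeval f g).totalDegree ≤ n * D ∧ homogeneousComponent (n * D) (aeval f g) =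
      aeval (fun i => homogeneousComponent D (f i)) g := by
  rw [aeval_sum, aeval_sum, map_sum]
  refine ⟨totalDegree_finsetSum_le fun m hm => ?_, Finset.sum_congr rfl fun m hm => ?_⟩
  · exact (mono_deg hf _ m (hom_support' hg hm)).1
  · exact (mono_deg hf _ m (hom_support' hg hm)).2

lemma pderiv_deg (i : Fin 3) (p : MvPolynomial (Fin 3) R) :
    (pderiv i p).totalDegree ≤ p.totalDegree - 1 := by
  conv_lhs => rw [p.as_sum]
  rw [map_sum]
  refine totalDegree_finsetSum_le fun m hm => ?_
  rw [pderiv_monomial]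
  rcases Nat.eq_zero_or_pos (m i) with h | h
  · simp [h]
  · refine (totalDegree_monomial_le _ _).trans ?_
    have h1 := le_totalDegree hm
    have h2 : m.degree = m.sum fun _ e => e := rfl
    have h3 : (m - Finsupp.single i 1).degree = (m - Finsupp.single i 1).sum fun _ e => e := rfl
    have h4 : m - Finsupp.single i 1 + Finsupp.single i 1 = m :=
      tsub_add_cancel_of_le (by rw [Finsupp.single_le_iff]; exact h)
    have h5 := congrArg Finsupp.degree h4
    rw [map_add, Finsupp.degree_single] at h5
    change (m - Finsupp.single i 1).sum (fun _ e => e) ≤ _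
    omega

/-- expanded jacobian bracket -/
noncomputable def jb (Ω f g : MvPolynomial (Fin 3) R) : MvPolynomial (Fin 3) R :=
  (pderiv 1 f * pderiv 2 g - pderiv 2 f * pderiv 1 g) * pderiv 0 Ω +
  (pderiv 2 f * pderiv 0 g - pderiv 0 f * pderiv 2 g) * pderiv 1 Ω +
  (pderiv 0 f * pderiv 1 g - pderiv 1 f * pderiv 0 g) * pderiv 2 Ω

lemma jb_deg {Ω f g : MvPolynomial (Fin 3) R} {d D : ℕ} (hΩ : Ω.totalDegree ≤ d)
    (hf : f.totalDegree ≤ D) (hg : g.totalDegree ≤ D) :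
    (jb Ω f g).totalDegree ≤ (D - 1) + (D - 1) + (d - 1) := by
  have hF : ∀ i, (pderiv i f).totalDegree ≤ D - 1 := fun i =>
    (pderiv_deg i f).trans (Nat.sub_le_sub_right hf 1)
  have hG : ∀ i, (pderiv i g).totalDegree ≤ D - 1 := fun i =>
    (pderiv_deg i g).trans (Nat.sub_le_sub_right hg 1)
  have hO : ∀ i, (pderiv i Ω).totalDegree ≤ d - 1 := fun i =>
    (pderiv_deg i Ω).trans (Nat.sub_le_sub_right hΩ 1)
  have key : ∀ i j k, ((pderiv i f * pderiv j g - pderiv j f * pderiv i g) *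
      pderiv k Ω).totalDegree ≤ (D - 1) + (D - 1) + (d - 1) := fun i j k => by
    refine (totalDegree_mul _ _).trans (add_le_add ?_ (hO k))
    refine (totalDegree_sub _ _).trans (max_le ?_ ?_)
    · exact (totalDegree_mul _ _).trans (add_le_add (hF _) (hG _))
    · exact (totalDegree_mul _ _).trans (add_le_add (hF _) (hG _))
  refine (totalDegree_add _ _).trans (max_le ?_ (key _ _ _))
  exact (totalDegree_add _ _).trans (max_le (key _ _ _) (key _ _ _))

/-- the bracket is compatible with the ideal generated by `Ω - ξ` -/
lemma jb_congr {Ω f f' g g' : MvPolynomial (Fin 3) R} {ξ : R} (hf : Ω - C ξ ∣ f - f')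
    (hg : Ω - C ξ ∣ g - g') : Ω - C ξ ∣ jb Ω f g - jb Ω f' g' := by
  obtain ⟨a, ha⟩ := hf
  obtain ⟨b, hb⟩ := hg
  have hf2 : f = f' + (Ω - C ξ) * a := by rw [← ha]; ring
  have hg2 : g = g' + (Ω - C ξ) * b := by rw [← hb]; ring
  refine ⟨jb Ω a g + jb Ω f' b, ?_⟩
  rw [hf2, hg2]
  simp only [jb, map_add, map_sub, Derivation.leibniz, smul_eq_mul, pderiv_C, sub_zero]
  ring

end
end PotAut

namespace PotAut
open MvPolynomial

section
variable {K : Type*} [Field K]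

lemma deg_hyp {Ω : MvPolynomial (Fin 3) K} {d : ℕ} (hom : Ω.IsHomogeneous d) (hd : 1 ≤ d)
    (h0 : Ω ≠ 0) (ξ : K) : (Ω - C ξ).totalDegree = d := by
  have hdeg := hom.totalDegree h0
  rw [sub_eq_add_neg, ← C_neg, totalDegree_add_eq_left_of_totalDegree_lt, hdeg]
  rw [totalDegree_C, hdeg]
  omega

lemma hyp_ne {Ω : MvPolynomial (Fin 3) K} {d : ℕ} (hom : Ω.IsHomogeneous d) (hd : 1 ≤ d)
    (h0 : Ω ≠ 0) (ξ : K) : Ω - C ξ ≠ 0 := by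
  intro h
  have := deg_hyp hom hd h0 ξ
  rw [h, totalDegree_zero] at this
  omega

lemma dvd_deg {Ω : MvPolynomial (Fin 3) K} {d : ℕ} (hom : Ω.IsHomogeneous d) (hd : 1 ≤ d)
    (h0 : Ω ≠ 0) {ξ : K} {p : MvPolynomial (Fin 3) K} (hp : Ω - C ξ ∣ p)
    (hdeg : p.totalDegree < d) : p = 0 := by
  by_contra hne
  have := totalDegree_le_of_dvd_of_isDomain hp hne
  rw [deg_hyp hom hd h0] at this
  omega

lemma comp_dvd {Ω : MvPolynomial (Fin 3) K} {d : ℕ} (hom : Ω.IsHomogeneous d) (hd : 1 ≤ d)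
    (h0 : Ω ≠ 0) {ξ : K} {p : MvPolynomial (Fin 3) K} (hp : Ω - C ξ ∣ p) {n : ℕ}
    (hdeg : p.totalDegree ≤ n) : Ω ∣ homogeneousComponent n p := by
  by_cases hne : p = 0
  · simp [hne]
  obtain ⟨q, rfl⟩ := hp
  have hq : q ≠ 0 := right_ne_zero_of_mul hne
  have hdd := totalDegree_mul_of_isDomain (hyp_ne hom hd h0 ξ) hq
  rw [deg_hyp hom hd h0] at hdd
  have hn : n = d + (n - d) := by omega
  rw [hn, comp_mul (deg_hyp hom hd h0 ξ).le (by omega)]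
  refine Dvd.dvd.mul_right ?_ _
  rw [map_sub, homogeneousComponent_eq_self hom,
    homogeneousComponent_eq_zero _ _ (by rw [totalDegree_C]; omega), sub_zero]

lemma low_deg {p : MvPolynomial (Fin 3) K} {D : ℕ} (hp : p.totalDegree ≤ D) (hD : 1 ≤ D) :
    (p - homogeneousComponent D p).totalDegree ≤ D - 1 := by
  refine Finset.sup_le fun m hm => ?_
  rw [mem_support_iff, coeff_sub, coeff_homogeneousComponent] at hm
  have h2 : m.degree = m.sum fun _ e => e := rfl
  rw [← h2]
  by_contra hlt
  rcases eq_or_ne m.degree D with h | h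
  · rw [if_pos h, sub_self] at hm
    exact hm rfl
  · rw [coeff_zero_of_deg hp (by omega)] at hm
    simp at hm

/-- minimal degree representative modulo `Ω - ξ` -/
def MinRep (Ω : MvPolynomial (Fin 3) K) (ξ : K) (p : MvPolynomial (Fin 3) K) : Prop :=
  ∀ q, Ω - C ξ ∣ p - q → p.totalDegree ≤ q.totalDegree

lemma exists_minRep (Ω : MvPolynomial (Fin 3) K) (ξ : K) (p : MvPolynomial (Fin 3) K) :
    ∃ q, Ω - C ξ ∣ p - q ∧ MinRep Ω ξ q := by
  classical
  have hex : ∃ n, ∃ q, Ω - C ξ ∣ p - q ∧ q.totalDegree = n := ⟨_, p, by simp, rfl⟩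
  obtain ⟨q, hq, hqn⟩ := Nat.find_spec hex
  refine ⟨q, hq, fun r hr => ?_⟩
  rw [hqn]
  refine Nat.find_min' hex ⟨r, ?_, rfl⟩
  have := dvd_add hq hr
  simpa using this

lemma minRep_top {Ω : MvPolynomial (Fin 3) K} {d : ℕ} (hom : Ω.IsHomogeneous d) (hd : 1 ≤ d)
    (h0 : Ω ≠ 0) {ξ : K} {p : MvPolynomial (Fin 3) K} (hm : MinRep Ω ξ p)
    (hD : 1 ≤ p.totalDegree) : ¬ Ω ∣ homogeneousComponent p.totalDegree p := by
  rintro ⟨b, hb⟩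
  set D := p.totalDegree with hDdef
  have h1 : (C ξ * b).totalDegree ≤ D - 1 := by
    refine (totalDegree_mul _ _).trans ?_
    rw [totalDegree_C, zero_add]
    by_cases hb0 : b = 0
    · simp [hb0]
    · have h2 := totalDegree_mul_of_isDomain h0 hb0
      rw [← hb, hom.totalDegree h0] at h2
      have h3 := (homogeneousComponent_isHomogeneous D p).totalDegree_le
      omega
  have h4 := hm (p - homogeneousComponent D p + C ξ * b) ⟨b, by rw [hb]; ring⟩
  have h5 := (totalDegree_add (p - homogeneousComponent D p) (C ξ * b)).trans
    (max_le (low_deg le_rfl hD) h1)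
  omega

lemma aeval_congr {p : MvPolynomial (Fin 3) K} {f g : Fin 3 → MvPolynomial (Fin 3) K}
    {w : MvPolynomial (Fin 3) K} (h : ∀ i, w ∣ f i - g i) : w ∣ aeval f p - aeval g p := by
  induction p using MvPolynomial.induction_on with
  | C a => simp
  | add p q hp hq =>
    rw [map_add, map_add, add_sub_add_comm]
    exact dvd_add hp hq
  | mul_X p i hp =>
    rw [map_mul, map_mul, aeval_X, aeval_X]
    have : aeval f p * f i - aeval g p * g i =
      (aeval f p - aeval g p) * f i + aeval g p * (f i - g i) := by ring
    rw [this]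
    exact dvd_add (hp.mul_right _) ((h i).mul_left _)

/-- The relations satisfied by the images of the generators. -/
def Rel (Ω : MvPolynomial (Fin 3) K) (ξ : K) (f : Fin 3 → MvPolynomial (Fin 3) K) : Prop :=
  (Ω - C ξ ∣ jb Ω (f 1) (f 2) - aeval f (pderiv 0 Ω)) ∧
  (Ω - C ξ ∣ jb Ω (f 2) (f 0) - aeval f (pderiv 1 Ω)) ∧
  (Ω - C ξ ∣ jb Ω (f 0) (f 1) - aeval f (pderiv 2 Ω))

lemma Rel.congr {Ω : MvPolynomial (Fin 3) K} {ξ : K} {f g : Fin 3 → MvPolynomial (Fin 3) K}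
    (h : ∀ i, Ω - C ξ ∣ f i - g i) (hf : Rel Ω ξ f) : Rel Ω ξ g := by
  have key : ∀ i j k, Ω - C ξ ∣ jb Ω (f i) (f j) - aeval f (pderiv k Ω) →
      Ω - C ξ ∣ jb Ω (g i) (g j) - aeval g (pderiv k Ω) := by
    intro i j k hijk
    have h1 := jb_congr (h i) (h j)
    have h2 : Ω - C ξ ∣ aeval f (pderiv k Ω) - aeval g (pderiv k Ω) := aeval_congr h
    have h3 := dvd_add (dvd_sub hijk h1) h2
    have h4 : jb Ω (g i) (g j) - aeval g (pderiv k Ω) =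
      jb Ω (f i) (f j) - aeval f (pderiv k Ω) - (jb Ω (f i) (f j) - jb Ω (g i) (g j)) +
      (aeval f (pderiv k Ω) - aeval g (pderiv k Ω)) := by ring
    rw [h4]
    exact h3
  exact ⟨key _ _ _ hf.1, key _ _ _ hf.2.1, key _ _ _ hf.2.2⟩

lemma Rel.deg_le_one {Ω : MvPolynomial (Fin 3) K} {d : ℕ} (hom : Ω.IsHomogeneous d) (hd : 4 ≤ d)
    (hiso : IsoS Ω) {ξ : K} {f : Fin 3 → MvPolynomial (Fin 3) K} (hf : Rel Ω ξ f)
    (hm : ∀ i, MinRep Ω ξ (f i)) (i : Fin 3) : (f i).totalDegree ≤ 1 := by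
  have h0 := ne_zero_of_Sm hiso.Sm
  obtain ⟨i0, hi0⟩ := Finite.exists_max (fun i => (f i).totalDegree)
  refine (hi0 i).trans ?_
  by_contra hlt
  set D := (f i0).totalDegree with hD
  have hD2 : 2 ≤ D := by omega
  have hcomp : ∀ i j k, Ω - C ξ ∣ jb Ω (f i) (f j) - aeval f (pderiv k Ω) →
      Ω ∣ aeval (fun i => homogeneousComponent D (f i)) (pderiv k Ω) := by
    intro i j k hijk
    have hA := aeval_comp (f := f) hi0 (hom.pderiv (i := k))
    have hJ := jb_deg hom.totalDegree_le (hi0 i) (hi0 j)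
    have hlt : (D - 1) + (D - 1) + (d - 1) < (d - 1) * D := by
      clear_value D
      obtain ⟨D', rfl⟩ : ∃ D', D = D' + 2 := ⟨D - 2, by omega⟩
      obtain ⟨d', rfl⟩ : ∃ d', d = d' + 4 := ⟨d - 4, by omega⟩
      simp only [Nat.add_sub_cancel, show D' + 2 - 1 = D' + 1 by omega,
        show d' + 4 - 1 = d' + 3 by omega]
      nlinarith
    have h1 := comp_dvd hom (by omega) h0 hijk (n := (d - 1) * D)
      ((totalDegree_sub _ _).trans (max_le (hJ.trans hlt.le) hA.1))
    rw [map_sub, hA.2, homogeneousComponent_eq_zero _ _ (lt_of_le_of_lt hJ hlt), zero_sub,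
      dvd_neg] at h1
    exact h1
  have hall : ∀ k, Ω ∣ aeval (fun i => homogeneousComponent D (f i)) (pderiv k Ω) := fun k =>
    match k with
    | 0 => hcomp _ _ _ hf.1
    | 1 => hcomp _ _ _ hf.2.1
    | 2 => hcomp _ _ _ hf.2.2
  obtain ⟨N, hN⟩ := hiso.exists_coeff
  obtain ⟨a, ha⟩ := hN i0
  have h3 := congrArg (aeval (fun i => homogeneousComponent D (f i))) ha
  rw [map_pow, aeval_X, map_sum] at h3
  have h4 : Ω ∣ homogeneousComponent D (f i0) ^ N := by
    rw [h3]
    exact Finset.dvd_sum fun j _ => by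
      rw [map_mul]
      exact (hall j).mul_left _
  exact minRep_top hom (by omega) h0 (hm i0) (by omega) (hiso.isRadical _ _ h4)

lemma deg_one_form {p : MvPolynomial (Fin 3) K} (hp : p.totalDegree ≤ 1) :
    ∃ (c : Fin 3 → K) (v : K), p = ∑ j, C (c j) * X j + C v := by
  have h1 := low_deg hp le_rfl
  have h2 := totalDegree_eq_zero_iff_eq_C.mp (Nat.le_zero.mp h1)
  have h3 : homogeneousComponent 1 p ∈ homogeneousSubmodule (Fin 3) K 1 :=
    homogeneousComponent_mem 1 p
  rw [homogeneousSubmodule_one_eq_span_X] at h3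
  obtain ⟨c, hc⟩ := (Submodule.mem_span_range_iff_exists_fun K).mp h3
  refine ⟨c, coeff 0 (p - homogeneousComponent 1 p), ?_⟩
  rw [← h2]
  have h4 : ∑ j, C (c j) * X j = homogeneousComponent 1 p := by
    rw [← hc]
    exact Finset.sum_congr rfl fun j _ => by rw [smul_eq_C_mul]
  rw [h4]
  ring

theorem linear_aut [CharZero K] {Ω : MvPolynomial (Fin 3) K} {d : ℕ} (hom : Ω.IsHomogeneous d)
    (hd : 4 ≤ d) (hiso : IsoS Ω) {ξ : K} {f : Fin 3 → MvPolynomial (Fin 3) K} (hf : Rel Ω ξ f)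
    (hinj : ∀ p, Ω - C ξ ∣ aeval f p → Ω - C ξ ∣ p) :
    ∃ M : Matrix (Fin 3) (Fin 3) K, M.det ≠ 0 ∧ Pres Ω M ∧
      ∀ i, Ω - C ξ ∣ f i - lsub M (X i) := by
  have h0 := ne_zero_of_Sm hiso.Sm
  choose g hg hgm using fun i => exists_minRep Ω ξ (f i)
  have hgR : Rel Ω ξ g := hf.congr hg
  have hg1 := hgR.deg_le_one hom hd hiso hgm
  choose M v hgM0 using fun i => deg_one_form (hg1 i)
  obtain ⟨M, hM⟩ : ∃ M' : Matrix (Fin 3) (Fin 3) K, ∀ i j, M' i j = M i j := ⟨M, fun _ _ => rfl⟩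
  have hgM : ∀ i, g i = lsub M (X i) + C (v i) := fun i => by
    rw [lsub_X, hgM0]
    simp only [hM]
  have hex : ∀ i j k, Ω - C ξ ∣ jb Ω (g i) (g j) - aeval g (pderiv k Ω) →
      jb Ω (g i) (g j) = aeval g (pderiv k Ω) := by
    intro i j k h
    refine sub_eq_zero.mp (dvd_deg hom (by omega) h0 h ?_)
    have hA := (aeval_comp (f := g) hg1 (hom.pderiv (i := k))).1
    have hJ := jb_deg hom.totalDegree_le (hg1 i) (hg1 j)
    have := (totalDegree_sub (jb Ω (g i) (g j)) (aeval g (pderiv k Ω))).trans (max_le hJ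
      (by simpa using hA))
    omega
  have e0 := hex _ _ _ hgR.1
  have e1 := hex _ _ _ hgR.2.1
  have e2 := hex _ _ _ hgR.2.2
  have hz : ∀ k, eval (0 : Fin 3 → K) (pderiv k Ω) = 0 := fun k => by
    have := eval_smul' (hom.pderiv (i := k)) (0 : K) 0
    rw [zero_smul, zero_pow (by omega), zero_mul] at this
    exact this
  have hz2 : ∀ a b, eval (0 : Fin 3 → K) (jb Ω a b) = 0 := fun a b => by
    simp only [jb, map_add, map_mul, hz, mul_zero, add_zero]
  have hev : ∀ p, eval (0 : Fin 3 → K) (aeval g p) = eval v p := fun p => by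
    induction p using MvPolynomial.induction_on with
    | C a => simp
    | add p q hp hq => rw [map_add, map_add, map_add, hp, hq]
    | mul_X p i hp =>
      rw [map_mul, map_mul, map_mul, hp, aeval_X, eval_X, hgM, map_add, eval_lsub, eval_C]
      simp
  have hv : v = 0 := hiso.Sm v fun k => by
    rw [← hev]
    match k with
    | 0 => rw [← e0, hz2]
    | 1 => rw [← e1, hz2]
    | 2 => rw [← e2, hz2]
  have hgl : ∀ i, g i = lsub M (X i) := fun i => by
    rw [hgM, hv]; simp
  have hag : ∀ p, aeval g p = lsub M p := fun p => by
    have : (aeval g : MvPolynomial (Fin 3) K →ₐ[K] MvPolynomial (Fin 3) K) = lsub M :=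
      algHom_ext fun i => by rw [aeval_X, hgl]
    rw [this]
  have hpd : ∀ i j, pderiv j (g i) = C (M i j) := fun i j => by
    rw [hgl, lsub_X, Fin.sum_univ_three]
    simp only [map_add, Derivation.leibniz, pderiv_C, pderiv_X, smul_eq_mul, mul_zero, add_zero]
    match j with
    | 0 => simp
    | 1 => simp
    | 2 => simp
  have hP : Pres Ω M := by
    have hE := hom.sum_X_mul_pderiv
    rw [Fin.sum_univ_three] at hE
    have hE2 := congrArg (lsub M) hE
    rw [hag] at e0 e1 e2
    rw [map_nsmul, map_add, map_add, map_mul, map_mul, map_mul, ← e0, ← e1, ← e2] at hE2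
    simp only [jb, hpd] at hE2
    simp only [lsub_X, Fin.sum_univ_three] at hE2
    unfold Pres
    have hd0 : (d : MvPolynomial (Fin 3) K) ≠ 0 := by
      exact_mod_cast (by omega : d ≠ 0)
    refine mul_left_cancel₀ hd0 ?_
    rw [nsmul_eq_mul] at hE hE2
    rw [← hE2, Matrix.det_fin_three]
    simp only [map_add, map_sub, map_mul]
    linear_combination (C (M 0 0) * C (M 1 1) * C (M 2 2) - C (M 0 0) * C (M 1 2) * C (M 2 1) -
      C (M 0 1) * C (M 1 0) * C (M 2 2) + C (M 0 1) * C (M 1 2) * C (M 2 0) +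
      C (M 0 2) * C (M 1 0) * C (M 2 1) - C (M 0 2) * C (M 1 1) * C (M 2 0)) * hE
  refine ⟨M, ?_, hP, fun i => by rw [← hgl]; exact hg i⟩
  intro hdet
  obtain ⟨c, hc, hcM⟩ := Matrix.exists_vecMul_eq_zero_iff.mpr hdet
  set p : MvPolynomial (Fin 3) K := ∑ i, C (c i) * X i with hp
  have hgp : aeval g p = 0 := by
    rw [hag, hp, map_sum]
    simp only [map_mul, lsub_C, lsub_X, Fin.sum_univ_three]
    have hcj : ∀ j, c 0 * M 0 j + c 1 * M 1 j + c 2 * M 2 j = 0 := fun j => by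
      have := congrFun hcM j
      rw [Matrix.vecMul, dotProduct, Fin.sum_univ_three] at this
      exact this
    have hC : ∀ j, C (c 0) * C (M 0 j) + C (c 1) * C (M 1 j) + C (c 2) * C (M 2 j) =
        (0 : MvPolynomial (Fin 3) K) := fun j => by
      rw [← C_mul, ← C_mul, ← C_mul, ← C_add, ← C_add, hcj, C_0]
    linear_combination X 0 * hC 0 + X 1 * hC 1 + X 2 * hC 2
  have hfp : Ω - C ξ ∣ aeval f p := by
    have h1 : Ω - C ξ ∣ aeval f p - aeval g p := aeval_congr hg
    rwa [hgp, sub_zero] at h1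
  have hp0 := dvd_deg hom (by omega) h0 (hinj p hfp) (by
    refine lt_of_le_of_lt (totalDegree_finsetSum_le (d := 1) fun i _ => ?_) (by omega : 1 < d)
    refine (totalDegree_mul _ _).trans ?_
    rw [totalDegree_C, totalDegree_X])
  refine hc (funext fun i => ?_)
  have := congrArg (eval (Pi.single i 1)) hp0
  rw [hp, map_sum, map_zero] at this
  simpa [Pi.single_apply] using this

end
end PotAut

namespace PotAut
open MvPolynomial

lemma jacBracket_eq_jb {R : Type*} [CommRing R] (Ω f g : MvPolynomial (Fin 3) R) :
    jacBracket Ω f g = jb Ω f g := by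
  unfold jacBracket jb
  rw [Matrix.det_fin_three]
  simp
  ring

lemma jb_map {R S : Type*} [CommRing R] [CommRing S] (φ : R →+* S)
    (Ω f g : MvPolynomial (Fin 3) R) :
    jb (map φ Ω) (map φ f) (map φ g) = map φ (jb Ω f g) := by
  unfold jb
  simp only [pderiv_map, map_add, map_mul, map_sub]

lemma jb_add_left {R : Type*} [CommRing R] (Ω f f' g : MvPolynomial (Fin 3) R) :
    jb Ω (f + f') g = jb Ω f g + jb Ω f' g := by
  unfold jb
  simp only [map_add]
  ring

lemma jb_add_right {R : Type*} [CommRing R] (Ω f g g' : MvPolynomial (Fin 3) R) :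
    jb Ω f (g + g') = jb Ω f g + jb Ω f g' := by
  unfold jb
  simp only [map_add]
  ring

lemma jb_C_mul {R : Type*} [CommRing R] (Ω f g : MvPolynomial (Fin 3) R) (a b : R) :
    jb Ω (C a * f) (C b * g) = C (a * b) * jb Ω f g := by
  unfold jb
  simp only [pderiv_C_mul, smul_eq_C_mul, C_mul]
  ring

lemma jb_X12 {R : Type*} [CommRing R] (Ω : MvPolynomial (Fin 3) R) :
    jb Ω (X 1) (X 2) = pderiv 0 Ω := by
  unfold jb
  simp [pderiv_X, Pi.single_apply]

lemma jb_X20 {R : Type*} [CommRing R] (Ω : MvPolynomial (Fin 3) R) :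
    jb Ω (X 2) (X 0) = pderiv 1 Ω := by
  unfold jb
  simp [pderiv_X, Pi.single_apply]

lemma jb_X01 {R : Type*} [CommRing R] (Ω : MvPolynomial (Fin 3) R) :
    jb Ω (X 0) (X 1) = pderiv 2 Ω := by
  unfold jb
  simp [pderiv_X, Pi.single_apply]

section poisson
variable {k A : Type*} [CommRing k] [CommRing A] [Algebra k A] (P : PoissonStructure k A)

lemma br_add_right (a b c : A) : P.bracket a (b + c) = P.bracket a b + P.bracket a c := by
  rw [P.antisymm a, P.add_left, P.antisymm a b, P.antisymm a c]
  ring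

lemma br_zero_right (a : A) : P.bracket a 0 = 0 := by
  have := br_add_right P a 0 0
  simpa using this

lemma br_zero_left (a : A) : P.bracket 0 a = 0 := by
  rw [P.antisymm, br_zero_right, neg_zero]

lemma br_one_right (a : A) : P.bracket a 1 = 0 := by
  have := P.leibniz a 1 1
  simpa using this

lemma br_one_left (a : A) : P.bracket 1 a = 0 := by
  rw [P.antisymm, br_one_right, neg_zero]

lemma br_sum_right {ι : Type*} (s : Finset ι) (a : A) (f : ι → A) :
    P.bracket a (∑ i ∈ s, f i) = ∑ i ∈ s, P.bracket a (f i) := by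
  classical
  induction s using Finset.induction_on with
  | empty => simp [br_zero_right]
  | insert i s hi ih => rw [Finset.sum_insert hi, Finset.sum_insert hi, br_add_right, ih]

end poisson

section quot
variable {k : Type*} [CommRing k] (Ω : MvPolynomial (Fin 3) k) (ξ : k)

/-- the projection as an algebra map -/
noncomputable def qmk : MvPolynomial (Fin 3) k →ₐ[k] PQuot k Ω ξ :=
  Ideal.Quotient.mkₐ k (Ideal.span {Ω - C ξ})

lemma qmk_eq (p : MvPolynomial (Fin 3) k) : qmk Ω ξ p = PQuot.mk Ω ξ p := rfl

lemma qmk_surj : Function.Surjective (qmk Ω ξ) := Ideal.Quotient.mk_surjective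

lemma qmk_rel : qmk Ω ξ (Ω - C ξ) = 0 :=
  Ideal.Quotient.eq_zero_iff_mem.mpr (Ideal.mem_span_singleton_self _)

/-- universal property -/
noncomputable def qlift {B : Type*} [CommRing B] [Algebra k B]
    (f : MvPolynomial (Fin 3) k →ₐ[k] B) (hf : f (Ω - C ξ) = 0) : PQuot k Ω ξ →ₐ[k] B :=
  Ideal.Quotient.liftₐ (Ideal.span {Ω - C ξ}) f (fun a ha => by
    obtain ⟨b, rfl⟩ := Ideal.mem_span_singleton.mp ha
    rw [map_mul, hf, zero_mul])

lemma qlift_qmk {B : Type*} [CommRing B] [Algebra k B]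
    (f : MvPolynomial (Fin 3) k →ₐ[k] B) (hf : f (Ω - C ξ) = 0) (p : MvPolynomial (Fin 3) k) :
    qlift Ω ξ f hf (qmk Ω ξ p) = f p := rfl

end quot

section bridge
variable {k K : Type*} [Field k] [Field K] [Algebra k K] (Ω : MvPolynomial (Fin 3) k) (ξ : k)

/-- the presentation of the base change -/
noncomputable def pr : MvPolynomial (Fin 3) K →ₐ[K] K ⊗[k] PQuot k Ω ξ :=
  aeval fun i => (1 : K) ⊗ₜ[k] qmk Ω ξ (X i)

lemma pr_map (p : MvPolynomial (Fin 3) k) :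
    pr (K := K) Ω ξ (map (algebraMap k K) p) = 1 ⊗ₜ[k] qmk Ω ξ p := by
  have h : ((pr (K := K) Ω ξ).restrictScalars k).comp
      (MvPolynomial.mapAlgHom (Algebra.ofId k K)) =
      (Algebra.TensorProduct.includeRight).comp (qmk Ω ξ) := by
    ext i
    simp [pr]
  exact DFunLike.congr_fun h p

lemma pr_C (c : K) : pr (K := K) Ω ξ (C c) = c ⊗ₜ[k] 1 := by
  rw [pr, aeval_C]
  rfl

lemma pr_C_mul_map (c : K) (p : MvPolynomial (Fin 3) k) :
    pr (K := K) Ω ξ (C c * map (algebraMap k K) p) = c ⊗ₜ[k] qmk Ω ξ p := by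
  rw [map_mul, pr_C, pr_map, Algebra.TensorProduct.tmul_mul_tmul, mul_one, one_mul]

lemma pr_rel : pr (K := K) Ω ξ (map (algebraMap k K) Ω - C (algebraMap k K ξ)) = 0 := by
  have : map (algebraMap k K) Ω - C (algebraMap k K ξ) = map (algebraMap k K) (Ω - C ξ) := by
    rw [map_sub, map_C]
  rw [this, pr_map, qmk_rel, TensorProduct.tmul_zero]

lemma pr_eq_zero_iff (p : MvPolynomial (Fin 3) K) :
    pr Ω ξ p = 0 ↔ map (algebraMap k K) Ω - C (algebraMap k K ξ) ∣ p := by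
  constructor
  · intro hp
    let J : Ideal (MvPolynomial (Fin 3) K) :=
      Ideal.span {map (algebraMap k K) Ω - C (algebraMap k K ξ)}
    let g : MvPolynomial (Fin 3) k →ₐ[k] (MvPolynomial (Fin 3) K ⧸ J) :=
      (Ideal.Quotient.mkₐ k J).comp (MvPolynomial.mapAlgHom (Algebra.ofId k K))
    have hgmk : ∀ q, g q = Ideal.Quotient.mk J (map (algebraMap k K) q) := fun q => rfl
    have hg : g (Ω - C ξ) = 0 := by
      rw [hgmk, map_sub, map_C]
      exact Ideal.Quotient.eq_zero_iff_mem.mpr (Ideal.mem_span_singleton_self _)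
    let ψ : K ⊗[k] PQuot k Ω ξ →ₐ[K] (MvPolynomial (Fin 3) K ⧸ J) :=
      Algebra.TensorProduct.lift (Algebra.ofId K _) (qlift Ω ξ g hg) (fun _ _ => Commute.all _ _)
    have h : ψ.comp (pr Ω ξ) = Ideal.Quotient.mkₐ K J := by
      apply MvPolynomial.algHom_ext
      intro i
      rw [AlgHom.comp_apply, pr, aeval_X, Algebra.TensorProduct.lift_tmul, map_one, one_mul,
        qlift_qmk, hgmk, map_X]
      rfl
    have h2 := DFunLike.congr_fun h p
    rw [AlgHom.comp_apply, hp, map_zero] at h2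
    exact Ideal.mem_span_singleton.mp (Ideal.Quotient.eq_zero_iff_mem.mp h2.symm)
  · rintro ⟨q, rfl⟩
    rw [map_mul, pr_rel, zero_mul]

lemma pr_eq_iff (p q : MvPolynomial (Fin 3) K) :
    pr Ω ξ p = pr Ω ξ q ↔ map (algebraMap k K) Ω - C (algebraMap k K ξ) ∣ p - q := by
  rw [← pr_eq_zero_iff, map_sub, sub_eq_zero]

lemma pr_surj : Function.Surjective (pr (K := K) Ω ξ) := by
  intro t
  induction t using TensorProduct.induction_on with
  | zero => exact ⟨0, map_zero _⟩
  | tmul c b =>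
    obtain ⟨p, rfl⟩ := qmk_surj Ω ξ b
    exact ⟨_, pr_C_mul_map Ω ξ c p⟩
  | add a b ha hb =>
    obtain ⟨p, rfl⟩ := ha
    obtain ⟨q, rfl⟩ := hb
    exact ⟨p + q, map_add _ _ _⟩

variable (PK : PoissonStructure k K)

/-- polynomials with Poisson central coefficients -/
noncomputable def Cen : AddSubmonoid (MvPolynomial (Fin 3) K) :=
  AddSubmonoid.closure {f | ∃ (c : K) (p : MvPolynomial (Fin 3) k),
    (∀ s, PK.bracket s c = 0) ∧ f = C c * map (algebraMap k K) p}

lemma X_mem_Cen (i : Fin 3) : (X i : MvPolynomial (Fin 3) K) ∈ Cen PK :=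
  AddSubmonoid.subset_closure ⟨1, X i, br_one_right PK, by rw [map_X, C_1, one_mul]⟩

variable {P : PoissonStructure k (PQuot k Ω ξ)}
  {PT : PoissonStructure k (K ⊗[k] PQuot k Ω ξ)} {PK}

lemma exists_cen (hPT : IsTensorBracket PK P PT)
    (t : K ⊗[k] PQuot k Ω ξ) (ht : ∀ s : K, PT.bracket (s ⊗ₜ[k] 1) t = 0) :
    ∃ f ∈ Cen PK, pr Ω ξ f = t := by
  classical
  let b := Module.Basis.ofVectorSpace k (PQuot k Ω ξ)
  let B := Algebra.TensorProduct.basis K b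
  have hB : ∀ i, B i = 1 ⊗ₜ[k] b i := fun i => Algebra.TensorProduct.basis_apply b i
  have hsum : t = ∑ i ∈ (B.repr t).support, (B.repr t i) ⊗ₜ[k] b i := by
    conv_lhs => rw [← B.linearCombination_repr t, Finsupp.linearCombination_apply, Finsupp.sum]
    refine Finset.sum_congr rfl fun i _ => ?_
    rw [hB, TensorProduct.smul_tmul', smul_eq_mul, mul_one]
  have hc : ∀ i ∈ (B.repr t).support, ∀ s, PK.bracket s (B.repr t i) = 0 := by
    intro i hi s
    have h1 := ht s
    rw [hsum, br_sum_right] at h1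
    have h2 : ∀ j ∈ (B.repr t).support, PT.bracket (s ⊗ₜ[k] 1) ((B.repr t j) ⊗ₜ[k] b j) =
        PK.bracket s (B.repr t j) • B j := by
      intro j _
      rw [hPT, br_one_left, TensorProduct.tmul_zero, add_zero, one_mul, hB,
        TensorProduct.smul_tmul', smul_eq_mul, mul_one]
    rw [Finset.sum_congr rfl h2] at h1
    exact linearIndependent_iff'.mp B.linearIndependent _ _ h1 i hi
  choose p hp using fun i => qmk_surj Ω ξ (b i)
  refine ⟨∑ i ∈ (B.repr t).support, C (B.repr t i) * map (algebraMap k K) (p i), ?_, ?_⟩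
  · exact AddSubmonoid.sum_mem _ fun i hi => AddSubmonoid.subset_closure ⟨_, _, hc i hi, rfl⟩
  · conv_rhs => rw [hsum]
    rw [map_sum]
    refine Finset.sum_congr rfl fun i _ => ?_
    rw [pr_C_mul_map, hp]

lemma br_cen (hP : IsInducedBracket Ω ξ P) (hPT : IsTensorBracket PK P PT)
    {f g : MvPolynomial (Fin 3) K} (hf : f ∈ Cen PK (k := k)) (hg : g ∈ Cen PK) :
    PT.bracket (pr Ω ξ f) (pr Ω ξ g) = pr Ω ξ (jb (map (algebraMap k K) Ω) f g) := by
  refine AddSubmonoid.closure_induction (motive := fun f _ => PT.bracket (pr Ω ξ f) (pr Ω ξ g) =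
    pr Ω ξ (jb (map (algebraMap k K) Ω) f g)) ?_ ?_ ?_ hf
  · rintro _ ⟨c, p, hc, rfl⟩
    refine AddSubmonoid.closure_induction (motive := fun g _ =>
      PT.bracket (pr Ω ξ (C c * map (algebraMap k K) p)) (pr Ω ξ g) =
      pr Ω ξ (jb (map (algebraMap k K) Ω) (C c * map (algebraMap k K) p) g)) ?_ ?_ ?_ hg
    · rintro _ ⟨c', q, hc', rfl⟩
      rw [jb_C_mul, jb_map, pr_C_mul_map, pr_C_mul_map, pr_C_mul_map, hPT, hc',
        TensorProduct.zero_tmul, zero_add, qmk_eq, qmk_eq, hP, qmk_eq, jacBracket_eq_jb]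
    · rw [map_zero, br_zero_right]
      simp [jb]
    · intro x y _ _ hx hy
      rw [jb_add_right, map_add, map_add, br_add_right, hx, hy]
  · rw [map_zero, br_zero_left]
    simp [jb]
  · intro x y _ _ hx hy
    rw [jb_add_left, map_add, map_add, PT.add_left, hx, hy]

lemma aut_linear [CharZero K] (hP : IsInducedBracket Ω ξ P) (hPT : IsTensorBracket PK P PT)
    {d : ℕ} (hom : Ω.IsHomogeneous d) (hd : 4 ≤ d) (hiso : IsoS Ω)
    (φ : (K ⊗[k] PQuot k Ω ξ) ≃ₐ[k] K ⊗[k] PQuot k Ω ξ)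
    (h1 : ∀ a b, φ (PT.bracket a b) = PT.bracket (φ a) (φ b))
    (h2 : ∀ s : K, φ (s ⊗ₜ[k] 1) = s ⊗ₜ[k] 1) :
    ∃ M : Matrix (Fin 3) (Fin 3) K, M.det ≠ 0 ∧ Pres (map (algebraMap k K) Ω) M ∧
      ∀ p, φ (pr Ω ξ p) = pr Ω ξ (lsub M p) := by
  let Φ : (K ⊗[k] PQuot k Ω ξ) →ₐ[K] K ⊗[k] PQuot k Ω ξ :=
    { (φ : (K ⊗[k] PQuot k Ω ξ) →+* K ⊗[k] PQuot k Ω ξ) with commutes' := h2 }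
  have hΦ : ∀ t, Φ t = φ t := fun t => rfl
  have hex : ∀ i, ∃ f ∈ Cen PK (k := k), pr Ω ξ f = φ (pr Ω ξ (X i)) := by
    intro i
    apply exists_cen Ω ξ hPT
    intro s
    have hx : pr (K := K) Ω ξ (X i) = 1 ⊗ₜ[k] qmk Ω ξ (X i) := by rw [pr, aeval_X]
    rw [← h2 s, ← h1, hx, hPT, br_one_right, br_one_left, TensorProduct.zero_tmul,
      TensorProduct.tmul_zero, add_zero, map_zero]
  choose f hfc hf using hex
  have hcomp : ∀ p, φ (pr Ω ξ p) = pr Ω ξ (aeval f p) := by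
    have : Φ.comp (pr Ω ξ) = (pr Ω ξ).comp (aeval f) := by
      apply MvPolynomial.algHom_ext
      intro i
      rw [AlgHom.comp_apply, AlgHom.comp_apply, aeval_X, hf, hΦ]
    exact fun p => DFunLike.congr_fun this p
  have hrel : ∀ i j, map (algebraMap k K) Ω - C (algebraMap k K ξ) ∣
      jb (map (algebraMap k K) Ω) (f i) (f j) -
        aeval f (jb (map (algebraMap k K) Ω) (X i) (X j)) := by
    intro i j
    rw [← pr_eq_iff, ← hcomp, ← br_cen Ω ξ hP hPT (hfc i) (hfc j),
      ← br_cen Ω ξ hP hPT (X_mem_Cen PK i) (X_mem_Cen PK j), h1, hf, hf]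
  have hR : Rel (map (algebraMap k K) Ω) (algebraMap k K ξ) f := by
    refine ⟨?_, ?_, ?_⟩
    · have := hrel 1 2
      rwa [jb_X12] at this
    · have := hrel 2 0
      rwa [jb_X20] at this
    · have := hrel 0 1
      rwa [jb_X01] at this
  obtain ⟨M, hM, hpres, hfM⟩ := linear_aut (hom.map (algebraMap k K)) hd (hiso.map _) hR (by
    intro p hp
    rw [← pr_eq_zero_iff, ← hcomp] at hp
    rw [← pr_eq_zero_iff]
    exact (map_eq_zero_iff φ φ.injective).mp hp)
  refine ⟨M, hM, hpres, ?_⟩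
  have : Φ.comp (pr Ω ξ) = (pr Ω ξ).comp (lsub M) := by
    apply MvPolynomial.algHom_ext
    intro i
    rw [AlgHom.comp_apply, AlgHom.comp_apply, hΦ, ← hf, pr_eq_iff]
    exact hfM i
  exact fun p => DFunLike.congr_fun this p

lemma Pres.mapU {R S : Type*} [Field R] [Field S] (φ : R →+* S)
    {Ω : MvPolynomial (Fin 3) R} {M : Matrix (Fin 3) (Fin 3) R} (h : Pres Ω M) :
    Pres (map φ Ω) (M.map φ) := by
  unfold Pres at *
  rw [← map_lsub, h, map_mul, map_C, RingHom.map_det]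
  rfl

theorem main_bound [CharZero k] (hP : IsInducedBracket Ω ξ P) (hPT : IsTensorBracket PK P PT)
    {d : ℕ} (hom : Ω.IsHomogeneous d) (hd : 4 ≤ d) (hiso : IsoS Ω) :
    Finite {f : (K ⊗[k] PQuot k Ω ξ) ≃ₐ[k] K ⊗[k] PQuot k Ω ξ //
      (∀ a b, f (PT.bracket a b) = PT.bracket (f a) (f b)) ∧
      ∀ s : K, f (s ⊗ₜ[k] 1) = s ⊗ₜ[k] 1} ∧
    Nat.card {f : (K ⊗[k] PQuot k Ω ξ) ≃ₐ[k] K ⊗[k] PQuot k Ω ξ //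
      (∀ a b, f (PT.bracket a b) = PT.bracket (f a) (f b)) ∧
      ∀ s : K, f (s ⊗ₜ[k] 1) = s ⊗ₜ[k] 1} ≤ 42 * d * (d - 3) ^ 2 := by
  haveI : CharZero K := charZero_of_injective_algebraMap (algebraMap k K).injective
  let L := AlgebraicClosure K
  haveI : CharZero L := charZero_of_injective_algebraMap (algebraMap K L).injective
  have homL := (hom.map (algebraMap k K)).map (algebraMap K L)
  have hs : Sm (map (algebraMap K L) (map (algebraMap k K) Ω)) := ((hiso.map _).map _).Sm
  haveI := PG_finite homL hd hs
  have hcard := PG_card homL hd hs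
  choose M hM hpres hact using fun f : {f : (K ⊗[k] PQuot k Ω ξ) ≃ₐ[k] K ⊗[k] PQuot k Ω ξ //
      (∀ a b, f (PT.bracket a b) = PT.bracket (f a) (f b)) ∧
      ∀ s : K, f (s ⊗ₜ[k] 1) = s ⊗ₜ[k] 1} =>
    aut_linear Ω ξ hP hPT hom hd hiso f.1 f.2.1 f.2.2
  have hu : ∀ f, IsUnit ((M f).map (algebraMap K L)) := by
    intro f
    have h3 : ((M f).map (algebraMap K L)).det = algebraMap K L (M f).det :=
      ((algebraMap K L).map_det (M f)).symm
    rw [Matrix.isUnit_iff_isUnit_det, h3]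
    exact (IsUnit.mk0 _ (hM f)).map _
  let F := fun f => (⟨(hu f).unit, Pres.mapU (algebraMap K L) (hpres f)⟩ :
    PG (map (algebraMap K L) (map (algebraMap k K) Ω)))
  have hF : Function.Injective F := by
    intro f g hfg
    have h4 : (M f).map (algebraMap K L) = (M g).map (algebraMap K L) :=
      congrArg (fun u : PG (map (algebraMap K L) (map (algebraMap k K) Ω)) =>
        (u.1 : Matrix (Fin 3) (Fin 3) L)) hfg
    have h5 : M f = M g := Matrix.map_injective (algebraMap K L).injective h4
    apply Subtype.ext
    apply AlgEquiv.ext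
    intro t
    obtain ⟨p, rfl⟩ := pr_surj Ω ξ t
    rw [hact, hact, h5]
  exact ⟨Finite.of_injective F hF, (Nat.card_le_card_of_injective F hF).trans hcard⟩

end bridge
end PotAut

/-- Lemma 3.5: for an i.s. potential `Ω` of degree `d ≥ 5` and a Poisson field `K`, the group
of Poisson algebra automorphisms of `K ⊗ P_{Ω-ξ}` fixing `K` pointwise has order at most
`42·d·(d-3)²`. -/
theorem poissonAut_baseChange_potential_card_le
    {𝕜 K : Type*} [Field 𝕜] [IsAlgClosed 𝕜] [CharZero 𝕜]
    [Field K] [Algebra 𝕜 K] (PK : PoissonStructure 𝕜 K)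
    (Ω : MvPolynomial (Fin 3) 𝕜) (d : ℕ) (hhom : Ω.IsHomogeneous d) (hd : 5 ≤ d)
    (hiso : HasIsolatedSingularity Ω) (ξ : 𝕜)
    (P : PoissonStructure 𝕜 (PQuot 𝕜 Ω ξ)) (hP : IsInducedBracket Ω ξ P)
    (PT : PoissonStructure 𝕜 (K ⊗[𝕜] PQuot 𝕜 Ω ξ)) (hPT : IsTensorBracket PK P PT) :
    Finite {f : (K ⊗[𝕜] PQuot 𝕜 Ω ξ) ≃ₐ[𝕜] K ⊗[𝕜] PQuot 𝕜 Ω ξ //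
      (∀ a b, f (PT.bracket a b) = PT.bracket (f a) (f b)) ∧
      ∀ s : K, f (s ⊗ₜ[𝕜] 1) = s ⊗ₜ[𝕜] 1} ∧
    Nat.card {f : (K ⊗[𝕜] PQuot 𝕜 Ω ξ) ≃ₐ[𝕜] K ⊗[𝕜] PQuot 𝕜 Ω ξ //
      (∀ a b, f (PT.bracket a b) = PT.bracket (f a) (f b)) ∧
      ∀ s : K, f (s ⊗ₜ[𝕜] 1) = s ⊗ₜ[𝕜] 1} ≤ 42 * d * (d - 3) ^ 2 := by
  exact PotAut.main_bound Ω ξ hP hPT hhom (by omega) (PotAut.IsoS.of_fd hhom hiso)
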